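/- Let m ≥ 2 be an integer and B_1, B_2 > 1 real numbers. Let t = t_{B_1}^{(m)} and assume 1/2 < t < 1, and set θ_m = (t^m − t·(1−t)^{m−1})/(t^m − (1−t)^m). Let 𝓕^m_{B_1,B_2} = { x ∈ (0,1) irrational : a_n(x)·a_{n+1}(x)⋯a_{n+m−1}(x) ≥ B_1^n for infinitely many n ∈ ℕ, and a_{n+1}(x)·a_{n+2}(x)⋯a_{n+m−1}(x) < B_2^n for all sufficiently large n ∈ ℕ }. If B_1^{θ_m} ≤ B_2, then dim_H 𝓕^m_{B_1,B_2} = t. -/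

import Mathlib

open Filter MeasureTheory Set

/-- The Gauss map `T(x) = 1/x - ⌊1/x⌋`. -/
noncomputable def gaussMap (x : ℝ) : ℝ := 1 / x - (⌊1 / x⌋ : ℤ)

/-- The `n`-th partial quotient `a_n(x)` (for `n ≥ 1`) of the continued
fraction expansion of `x`: `a_n(x) = ⌊1 / T^{n-1}(x)⌋`. -/
noncomputable def pq (x : ℝ) (n : ℕ) : ℕ := ⌊1 / (gaussMap^[n - 1] x)⌋₊

/-- The continuant `q_n(a_1, …, a_n)`: `q_0 = 1`, `q_1 = a_1`,
`q_k = a_k q_{k-1} + q_{k-2}`. -/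
def contQ : (n : ℕ) → (Fin n → ℕ) → ℕ
  | 0, _ => 1
  | 1, a => a 0
  | (n + 2), a =>
      a (Fin.last (n + 1)) * contQ (n + 1) (Fin.init a) +
        contQ n (Fin.init (Fin.init a))

/-- `s_B`: the Wang–Wu pressure exponent. -/
noncomputable def sExp (B : ℝ) : ℝ :=
  sInf {s : ℝ | 0 ≤ s ∧
    Filter.atTop.limsup (fun n : ℕ =>
      (((n : ℝ)⁻¹ : ℝ) : EReal) * ENNReal.log (∑' a : Fin n → ℕ+,
        ENNReal.ofReal ((B ^ n * ((contQ n fun i => (a i : ℕ)) : ℝ) ^ 2) ^ (-s)))) ≤ 0}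

/-- `g_{B₁,B₂}`: the two-parameter pressure exponent. -/
noncomputable def gExp (B₁ B₂ : ℝ) : ℝ :=
  sInf {s : ℝ | 0 ≤ s ∧
    Filter.atTop.limsup (fun n : ℕ =>
      (((n : ℝ)⁻¹ : ℝ) : EReal) * ENNReal.log (∑' a : Fin n → ℕ+,
        ENNReal.ofReal (B₂ ^ ((1 - s) * (n : ℝ)) *
          (B₁ ^ n * ((contQ n fun i => (a i : ℕ)) : ℝ) ^ 2) ^ (-s)))) ≤ 0}

/-- The iterates `f_1(s) = s`, `f_{k+1}(s) = s f_k(s) / (1 - s + f_k(s))`;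
here `fIter s k = f_{k+1}(s)`, so `f_m(s) = fIter s (m - 1)`. -/
noncomputable def fIter (s : ℝ) : ℕ → ℝ
  | 0 => s
  | (k + 1) => s * fIter s k / (1 - s + fIter s k)

/-- `t_B^{(m)}`: the Huang–Wu–Xu pressure exponent. -/
noncomputable def tExpM (B : ℝ) (m : ℕ) : ℝ :=
  sInf {s : ℝ | 0 ≤ s ∧ s ≤ 1 ∧
    Filter.atTop.limsup (fun n : ℕ =>
      (((n : ℝ)⁻¹ : ℝ) : EReal) * ENNReal.log (∑' a : Fin n → ℕ+,
        ENNReal.ofReal (B ^ (-(n : ℝ) * fIter s (m - 1)) *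
          ((contQ n fun i => (a i : ℕ)) : ℝ) ^ (-(2 * s))))) ≤ 0}

/-!
Upper bound: if the product of the `m` digits after position `n` exceeds `B₁ ^ n`, there is a first
`i` for which the product of the first `i + 1` of them exceeds `B₁ ^ (n * E_{i+1})`. Choosing the
exponents `E_i` by the recursion `s * E_{i+1} = f + (1 - s) * E_i`, `E_0 = 0`, makes the natural
cover by the corresponding cylinders contribute `∑ B₁ ^ (-n * f) * q_n ^ (-2 * s)`, whatever `i` is.
The condition `E_m = 1` says exactly that `f = f_m(s)`, so the cover sums are those defining `t`.

Lower bound: for `s < t` the partition sum over a long enough block of bounded digits is large. Take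
the Cantor set of the points whose digits come in such blocks, interrupted at sparse positions `n`
by special blocks whose `i`-th digit is of size `B₁ ^ (n * (E_{i+1} - E_i))`. Giving ordinary blocks
the weights of the partition sum and equidistributing the special ones yields a measure to which
the mass distribution principle applies with exponent `s`.

At `s = t` the last digit of a special block has exponent `1 - θ_m`, and the exponents decrease
along the block. So `m - 1` consecutive digits have product about `B₁ ^ (n * θ_m)` at most, and for
`s < t` the exponent drops strictly below `θ_m`, which makes the second condition automatic.
-/

open scoped ENNReal NNReal Topology

namespace GaussCF

/-! ### Continuants -/

/-- The continuant `q_n` of the first `n` terms of an infinite digit sequence, digits being indexed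
from `0`. -/
def continuant (a : ℕ → ℕ) : ℕ → ℕ
  | 0 => 1
  | 1 => a 0
  | n + 2 => a (n + 1) * continuant a (n + 1) + continuant a n

/-- The continuant `q_{n-1}`, with the convention `q_{-1} = 0`. -/
def prevContinuant (a : ℕ → ℕ) : ℕ → ℕ
  | 0 => 0
  | n + 1 => continuant a n

lemma continuant_succ (a : ℕ → ℕ) (n : ℕ) :
    continuant a (n + 1) = a n * continuant a n + prevContinuant a n := by
  cases n <;> simp [continuant, prevContinuant]

lemma contQ_eq_continuant (a : ℕ → ℕ) : ∀ n, contQ n (fun i => a i) = continuant a n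
  | 0 => rfl
  | 1 => rfl
  | n + 2 => by
    rw [continuant, ← contQ_eq_continuant a (n + 1), ← contQ_eq_continuant a n]
    rfl

lemma one_le_continuant {a : ℕ → ℕ} (ha : ∀ i, 1 ≤ a i) : ∀ n, 1 ≤ continuant a n
  | 0 => le_rfl
  | n + 1 => by
    rw [continuant_succ]
    nlinarith [ha n, one_le_continuant ha n]

lemma prevContinuant_le {a : ℕ → ℕ} (ha : ∀ i, 1 ≤ a i) : ∀ n, prevContinuant a n ≤ continuant a n
  | 0 => Nat.zero_le _
  | n + 1 => by
    rw [prevContinuant, continuant_succ]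
    nlinarith [ha n]

lemma continuant_mul_prod_le (a : ℕ → ℕ) (n k : ℕ) :
    continuant a n * ∏ i ∈ Finset.range k, a (n + i) ≤ continuant a (n + k) := by
  induction k with
  | zero => simp
  | succ k ih =>
    rw [Finset.prod_range_succ, ← add_assoc, continuant_succ]
    nlinarith [Nat.mul_le_mul_left (a (n + k)) ih]

lemma continuant_le_mul_prod {a : ℕ → ℕ} (ha : ∀ i, 1 ≤ a i) (n k : ℕ) :
    continuant a (n + k) ≤ continuant a n * ∏ i ∈ Finset.range k, (a (n + i) + 1) := by
  induction k with
  | zero => simp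
  | succ k ih =>
    rw [Finset.prod_range_succ, ← add_assoc, continuant_succ]
    nlinarith [Nat.mul_le_mul_left (a (n + k) + 1) ih, prevContinuant_le ha (n + k)]

lemma continuant_add_le {a : ℕ → ℕ} (ha : ∀ i, 1 ≤ a i) (n : ℕ) :
    ∀ k, continuant a (n + k) ≤ 2 * continuant a n * continuant (fun i => a (n + i)) k
  | 0 => by
    simp only [add_zero, continuant, mul_one]
    lia
  | 1 => by
    simp only [continuant_succ, continuant, add_zero]
    nlinarith [ha n, prevContinuant_le ha n, one_le_continuant ha n]
  | k + 2 => by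
    rw [← add_assoc, continuant, continuant, add_assoc n k 1]
    nlinarith [Nat.mul_le_mul_left (a (n + (k + 1))) (continuant_add_le ha n (k + 1)),
      continuant_add_le ha n k]

lemma two_pow_le_two_mul_continuant_sq {a : ℕ → ℕ} (ha : ∀ i, 1 ≤ a i) :
    ∀ n, 2 ^ n ≤ 2 * continuant a n ^ 2
  | 0 => by simp [continuant]
  | 1 => by nlinarith [one_le_continuant ha 1]
  | n + 2 => by
    have hdouble : 2 * continuant a n ≤ continuant a (n + 2) := by
      rw [continuant]
      nlinarith [ha (n + 1), prevContinuant_le ha (n + 1), prevContinuant.eq_2 a n]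
    calc 2 ^ (n + 2) = 4 * 2 ^ n := by ring
      _ ≤ 4 * (2 * continuant a n ^ 2) := by gcongr; exact two_pow_le_two_mul_continuant_sq ha n
      _ = 2 * (2 * continuant a n) ^ 2 := by ring
      _ ≤ 2 * continuant a (n + 2) ^ 2 := by gcongr

/-! ### Continued fractions as compositions of inverse branches of the Gauss map -/

/-- The inverse branch `z ↦ [a_0, …, a_{n-1} + z]` of the `n`-th iterate of the Gauss map. -/
noncomputable def cfMap (a : ℕ → ℕ) : ℕ → ℝ → ℝ
  | 0, z => z
  | n + 1, z => cfMap a n (1 / (a n + z))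

lemma cfMap_congr {a b : ℕ → ℕ} {n : ℕ} (h : ∀ i < n, a i = b i) (z : ℝ) :
    cfMap a n z = cfMap b n z := by
  induction n generalizing z with
  | zero => rfl
  | succ n ih =>
    simp only [cfMap, h n (by lia)]
    exact ih (fun i hi => h i (by lia)) _

lemma cfMap_succ' (a : ℕ → ℕ) (n : ℕ) (z : ℝ) :
    cfMap a (n + 1) z = 1 / (a 0 + cfMap (fun i => a (i + 1)) n z) := by
  induction n generalizing z with
  | zero => rfl
  | succ n ih => rw [cfMap, ih, cfMap]

lemma one_div_add_mem_Icc {d : ℕ} (hd : 1 ≤ d) {z : ℝ} (hz : 0 ≤ z) :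
    1 / (d + z) ∈ Icc (0 : ℝ) 1 := by
  have hd' : (1 : ℝ) ≤ d := by exact_mod_cast hd
  exact ⟨by positivity, (div_le_one (by linarith)).2 (by linarith)⟩

lemma cfMap_mem_Icc {a : ℕ → ℕ} (ha : ∀ i, 1 ≤ a i) (n : ℕ) {z : ℝ} (hz : z ∈ Icc (0 : ℝ) 1) :
    cfMap a n z ∈ Icc (0 : ℝ) 1 := by
  induction n generalizing z with
  | zero => exact hz
  | succ n ih => exact ih (one_div_add_mem_Icc (ha n) hz.1)

lemma abs_cfMap_sub {a : ℕ → ℕ} (ha : ∀ i, 1 ≤ a i) (n : ℕ) {z w : ℝ} (hz : 0 ≤ z) (hw : 0 ≤ w) :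
    |cfMap a n z - cfMap a n w| = |z - w| / ((continuant a n + prevContinuant a n * z) *
      (continuant a n + prevContinuant a n * w)) := by
  induction n generalizing z w with
  | zero => simp [cfMap, continuant, prevContinuant]
  | succ n ih =>
    have han : (1 : ℝ) ≤ a n := by exact_mod_cast ha n
    have : (1 : ℝ) ≤ continuant a n := by exact_mod_cast one_le_continuant ha n
    have hz' : 0 < (a n : ℝ) + z := by linarith
    have hw' : 0 < (a n : ℝ) + w := by linarith
    have hinv : 1 / ((a n : ℝ) + z) - 1 / (a n + w) = -(z - w) / ((a n + z) * (a n + w)) := by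
      field_simp; ring
    rw [cfMap, cfMap, ih (by positivity) (by positivity), hinv, abs_div, abs_neg,
      abs_of_pos (mul_pos hz' hw'), div_div, continuant_succ, prevContinuant]
    congr 1
    push_cast
    field_simp
    ring

lemma abs_cfMap_sub_le {a : ℕ → ℕ} (ha : ∀ i, 1 ≤ a i) (n : ℕ) {z w : ℝ} (hz : 0 ≤ z)
    (hw : 0 ≤ w) : |cfMap a n z - cfMap a n w| ≤ |z - w| / (continuant a n : ℝ) ^ 2 := by
  have : (1 : ℝ) ≤ continuant a n := by exact_mod_cast one_le_continuant ha n
  have hle : ∀ {y : ℝ}, 0 ≤ y → (continuant a n : ℝ) ≤ continuant a n + prevContinuant a n * y :=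
    fun hy => le_add_of_nonneg_right (by positivity)
  rw [abs_cfMap_sub ha n hz hw, pow_two]
  gcongr <;> exact hle ‹_›

lemma le_abs_cfMap_sub {a : ℕ → ℕ} (ha : ∀ i, 1 ≤ a i) (n : ℕ) {z w : ℝ}
    (hz : z ∈ Icc (0 : ℝ) 1) (hw : w ∈ Icc (0 : ℝ) 1) :
    |z - w| / (4 * (continuant a n : ℝ) ^ 2) ≤ |cfMap a n z - cfMap a n w| := by
  have hq : (1 : ℝ) ≤ continuant a n := by exact_mod_cast one_le_continuant ha n
  have hq' : (prevContinuant a n : ℝ) ≤ continuant a n := by exact_mod_cast prevContinuant_le ha n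
  have hle : ∀ {y : ℝ}, y ∈ Icc (0 : ℝ) 1 →
      (continuant a n : ℝ) + prevContinuant a n * y ≤ 2 * continuant a n := by
    rintro y ⟨-, hy⟩
    nlinarith [Nat.cast_nonneg (α := ℝ) (prevContinuant a n)]
  have hz0 := hz.1
  have hw0 := hw.1
  rw [abs_cfMap_sub ha n hz.1 hw.1,
    show 4 * (continuant a n : ℝ) ^ 2 = 2 * continuant a n * (2 * continuant a n) by ring]
  gcongr
  exacts [hle hz, hle hw]

lemma measurable_cfMap (n : ℕ) : Measurable fun p : (ℕ → ℕ) × ℝ => cfMap p.1 n p.2 := by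
  induction n with
  | zero => exact measurable_snd
  | succ n ih =>
    have hdigit : Measurable fun p : (ℕ → ℕ) × ℝ => (p.1 n : ℝ) :=
      (measurable_from_top (f := Nat.cast)).comp ((measurable_pi_apply n).comp measurable_fst)
    exact ih.comp (measurable_fst.prodMk (measurable_const.div (hdigit.add measurable_snd)))

/-! ### Infinite continued fractions -/

/-- The value `[a_0, a_1, …]` of an infinite continued fraction. It is a limit when all digits are
positive; the limit superior makes it a measurable function of every digit sequence. -/
noncomputable def cfValue (a : ℕ → ℕ) : ℝ := limsup (fun n => cfMap a n 0) atTop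

lemma measurable_cfValue : Measurable cfValue :=
  Measurable.limsup fun n => (measurable_cfMap n).comp (measurable_id.prodMk measurable_const)

lemma tendsto_cfValue {a : ℕ → ℕ} (ha : ∀ i, 1 ≤ a i) :
    Tendsto (fun n => cfMap a n 0) atTop (𝓝 (cfValue a)) := by
  have hcauchy : CauchySeq fun n => cfMap a n 0 := by
    refine cauchySeq_of_le_geometric_two (C := 4) fun n => ?_
    have hpow : (2 : ℝ) ^ n ≤ 2 * (continuant a n : ℝ) ^ 2 := by
      exact_mod_cast two_pow_le_two_mul_continuant_sq ha n
    have hq : (1 : ℝ) ≤ continuant a n := by exact_mod_cast one_le_continuant ha n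
    have hz := one_div_add_mem_Icc (ha n) le_rfl
    calc dist (cfMap a n 0) (cfMap a (n + 1) 0)
        ≤ |0 - 1 / ((a n : ℝ) + 0)| / (continuant a n : ℝ) ^ 2 :=
          abs_cfMap_sub_le ha n le_rfl hz.1
      _ ≤ 1 / (continuant a n : ℝ) ^ 2 := by
          gcongr
          rw [zero_sub, abs_neg, abs_of_nonneg hz.1]
          exact hz.2
      _ ≤ 4 / 2 / 2 ^ n := by
          rw [div_le_div_iff₀ (by positivity) (by positivity)]
          linarith
  obtain ⟨x, hx⟩ := cauchySeq_tendsto_of_complete hcauchy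
  rwa [cfValue, hx.limsup_eq]

lemma cfValue_mem_Icc {a : ℕ → ℕ} (ha : ∀ i, 1 ≤ a i) : cfValue a ∈ Icc (0 : ℝ) 1 :=
  isClosed_Icc.mem_of_tendsto (tendsto_cfValue ha)
    (Eventually.of_forall fun n => cfMap_mem_Icc ha n ⟨le_rfl, zero_le_one⟩)

lemma cfValue_eq_one_div {a : ℕ → ℕ} (ha : ∀ i, 1 ≤ a i) :
    cfValue a = 1 / (a 0 + cfValue fun i => a (i + 1)) := by
  have ha0 : (1 : ℝ) ≤ a 0 := by exact_mod_cast ha 0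
  have htail := cfValue_mem_Icc fun i => ha (i + 1)
  refine tendsto_nhds_unique ((tendsto_add_atTop_iff_nat 1).2 (tendsto_cfValue ha)) ?_
  simp only [cfMap_succ']
  exact tendsto_const_nhds.div (tendsto_const_nhds.add (tendsto_cfValue fun i => ha (i + 1)))
    (by linarith [htail.1])

lemma one_div_cfValue {a : ℕ → ℕ} (ha : ∀ i, 1 ≤ a i) :
    1 / cfValue a = a 0 + cfValue fun i => a (i + 1) := by
  rw [cfValue_eq_one_div ha, one_div_one_div]

lemma cfValue_eq_cfMap {a : ℕ → ℕ} (ha : ∀ i, 1 ≤ a i) (n : ℕ) :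
    cfValue a = cfMap a n (cfValue fun i => a (n + i)) := by
  induction n with
  | zero => simp [cfMap]
  | succ n ih =>
    rw [cfMap, ih, cfValue_eq_one_div fun i => ha (n + i)]
    simp only [add_zero, add_comm, add_left_comm]

lemma cfValue_pos {a : ℕ → ℕ} (ha : ∀ i, 1 ≤ a i) : 0 < cfValue a := by
  have ha0 : (1 : ℝ) ≤ a 0 := by exact_mod_cast ha 0
  have htail := (cfValue_mem_Icc fun i => ha (i + 1)).1
  rw [cfValue_eq_one_div ha]
  positivity

lemma cfValue_le_one_div {a : ℕ → ℕ} (ha : ∀ i, 1 ≤ a i) : cfValue a ≤ 1 / a 0 := by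
  have ha0 : (1 : ℝ) ≤ a 0 := by exact_mod_cast ha 0
  have htail := (cfValue_mem_Icc fun i => ha (i + 1)).1
  rw [cfValue_eq_one_div ha]
  exact one_div_le_one_div_of_le (by linarith) (by linarith)

lemma one_div_add_one_le_cfValue {a : ℕ → ℕ} (ha : ∀ i, 1 ≤ a i) :
    1 / ((a 0 : ℝ) + 1) ≤ cfValue a := by
  have ha0 : (1 : ℝ) ≤ a 0 := by exact_mod_cast ha 0
  have htail := cfValue_mem_Icc fun i => ha (i + 1)
  rw [cfValue_eq_one_div ha]
  exact one_div_le_one_div_of_le (by linarith [htail.1]) (by linarith [htail.2])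

lemma cfValue_mem_Ioo {a : ℕ → ℕ} (ha : ∀ i, 1 ≤ a i) : cfValue a ∈ Ioo (0 : ℝ) 1 := by
  refine ⟨cfValue_pos ha, ?_⟩
  have ha0 : (1 : ℝ) ≤ a 0 := by exact_mod_cast ha 0
  have htail := cfValue_pos fun i => ha (i + 1)
  rw [cfValue_eq_one_div ha, div_lt_one (by linarith)]
  linarith

lemma gaussMap_cfValue {a : ℕ → ℕ} (ha : ∀ i, 1 ≤ a i) :
    gaussMap (cfValue a) = cfValue fun i => a (i + 1) := by
  have htail := cfValue_mem_Ioo fun i => ha (i + 1)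
  have hfloor : ⌊(a 0 : ℝ) + cfValue fun i => a (i + 1)⌋ = a 0 := by
    rw [Int.floor_eq_iff]
    push_cast
    constructor <;> linarith [htail.1, htail.2]
  rw [gaussMap, one_div_cfValue ha, hfloor]
  push_cast
  ring

lemma gaussMap_iterate_cfValue {a : ℕ → ℕ} (ha : ∀ i, 1 ≤ a i) (n : ℕ) :
    gaussMap^[n] (cfValue a) = cfValue fun i => a (n + i) := by
  induction n with
  | zero => simp
  | succ n ih =>
    rw [Function.iterate_succ_apply', ih, gaussMap_cfValue fun i => ha (n + i)]
    simp only [add_comm, add_left_comm]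

lemma pq_cfValue {a : ℕ → ℕ} (ha : ∀ i, 1 ≤ a i) (n : ℕ) : pq (cfValue a) (n + 1) = a n := by
  have htail := cfValue_mem_Ioo fun i => ha (n + (i + 1))
  rw [pq, Nat.add_sub_cancel, gaussMap_iterate_cfValue ha, one_div_cfValue fun i => ha (n + i),
    add_zero, Nat.floor_eq_iff (by linarith [htail.1, Nat.cast_nonneg (α := ℝ) (a n)])]
  constructor <;> linarith [htail.1, htail.2]

-- Euclid's algorithm: if `cfValue a = p / q`, the value of the tail is a fraction of denominator
-- `p < q`.
lemma cfValue_mul_ne {a : ℕ → ℕ} (ha : ∀ i, 1 ≤ a i) {q : ℕ} (hq : q ≠ 0) (p : ℕ) :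
    cfValue a * q ≠ p := by
  induction q using Nat.strong_induction_on generalizing a p with
  | _ q ih =>
    intro h
    have hq0 : (0 : ℝ) < q := by positivity
    obtain ⟨hpos, hlt⟩ := cfValue_mem_Ioo ha
    have hp : (0 : ℝ) < p := by rw [← h]; positivity
    have hpq : p < q := by
      have : (p : ℝ) < q := by rw [← h]; nlinarith
      exact_mod_cast this
    have htail : cfValue (fun i => a (i + 1)) * p = q - a 0 * p := by
      rw [← sub_eq_of_eq_add' (one_div_cfValue ha), ← h]
      field_simp
    have hle : a 0 * p ≤ q := by
      have : (a 0 * p : ℝ) ≤ q := by nlinarith [cfValue_pos fun i => ha (i + 1)]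
      exact_mod_cast this
    refine ih p hpq (fun i => ha (i + 1)) (by exact_mod_cast hp.ne') (q - a 0 * p) ?_
    rw [htail]
    push_cast [Nat.cast_sub hle]
    ring

lemma irrational_cfValue {a : ℕ → ℕ} (ha : ∀ i, 1 ≤ a i) : Irrational (cfValue a) := by
  rintro ⟨r, hr⟩
  have hnum : 0 ≤ r.num := by
    have := cfValue_pos ha
    rw [← hr] at this
    exact Rat.num_nonneg.2 (by exact_mod_cast this.le)
  refine cfValue_mul_ne ha r.den_ne_zero r.num.toNat ?_
  have hcast : ((r.num.toNat : ℕ) : ℝ) = (r.num : ℝ) := by exact_mod_cast Int.toNat_of_nonneg hnum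
  rw [← hr, hcast]
  exact_mod_cast Rat.mul_den_eq_num r

/-! ### Separation of continued fractions -/

lemma one_div_add_one_le_one_sub_cfValue_add_cfValue {a b : ℕ → ℕ} (ha : ∀ i, 1 ≤ a i)
    (hb : ∀ i, 1 ≤ b i) {M : ℕ} (hM : 1 ≤ M) (h : 2 ≤ a 0 ∨ b 0 ≤ M) :
    1 / ((M : ℝ) + 1) ≤ 1 - cfValue a + cfValue b := by
  have hM' : (1 : ℝ) ≤ M := by exact_mod_cast hM
  rcases h with h | h
  · have h2 : (2 : ℝ) ≤ a 0 := by exact_mod_cast h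
    have ha_le : cfValue a ≤ 1 / 2 := (cfValue_le_one_div ha).trans (by gcongr)
    have hM_le : 1 / ((M : ℝ) + 1) ≤ 1 / 2 := by gcongr; linarith
    linarith [cfValue_pos hb]
  · have hbM : (b 0 : ℝ) ≤ M := by exact_mod_cast h
    have hb_ge : 1 / ((M : ℝ) + 1) ≤ cfValue b :=
      le_trans (by gcongr) (one_div_add_one_le_cfValue hb)
    linarith [(cfValue_mem_Ioo ha).2]

lemma mul_sub_div_le_abs_one_div_sub {p q u v c : ℝ} (hp : 1 ≤ p) (hpq : p + 1 ≤ q)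
    (hu : u ∈ Icc (0 : ℝ) 1) (hv : v ∈ Icc (0 : ℝ) 1) (hc1 : c ≤ 1) (hc : c ≤ 1 - u + v) :
    c * (q - p) / (4 * (p * q)) ≤ |1 / (p + u) - 1 / (q + v)| := by
  obtain ⟨hu0, hu1⟩ := hu
  obtain ⟨hv0, hv1⟩ := hv
  have hq : 0 < q := by linarith
  have hnum : c * (q - p) ≤ q - p + (v - u) := by nlinarith
  have hsub : 1 / (p + u) - 1 / (q + v) = (q - p + (v - u)) / ((p + u) * (q + v)) := by
    field_simp; ring
  have hden : (p + u) * (q + v) ≤ 4 * (p * q) := by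
    calc (p + u) * (q + v) ≤ (2 * p) * (2 * q) := by gcongr <;> linarith
      _ = 4 * (p * q) := by ring
  rw [hsub]
  refine (div_le_div_of_nonneg_right hnum (by positivity)).trans (le_trans ?_ (le_abs_self _))
  exact div_le_div_of_nonneg_left (by linarith) (by positivity) hden

-- If `a` and `b` first differ at place `n`, the cylinders of `a_n` and `b_n` may be adjacent; the
-- hypothesis on the following digit keeps the two points away from the common endpoint.
lemma le_abs_cfValue_sub_cfValue {a b : ℕ → ℕ} (ha : ∀ i, 1 ≤ a i) (hb : ∀ i, 1 ≤ b i) {n : ℕ}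
    (hab : ∀ i < n, a i = b i) (hlt : a n < b n) {M : ℕ} (hM : 1 ≤ M)
    (hnext : 2 ≤ a (n + 1) ∨ b (n + 1) ≤ M) :
    ((b n : ℝ) - a n) / (16 * (M + 1) * (continuant a n : ℝ) ^ 2 * (a n * b n)) ≤
      |cfValue a - cfValue b| := by
  have han : (1 : ℝ) ≤ a n := by exact_mod_cast ha n
  have hbn : (a n : ℝ) + 1 ≤ b n := by exact_mod_cast hlt
  set u := cfValue fun i => a (n + (i + 1))
  set v := cfValue fun i => b (n + (i + 1))
  have htail : 1 / ((M : ℝ) + 1) ≤ 1 - u + v :=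
    one_div_add_one_le_one_sub_cfValue_add_cfValue (fun i => ha _) (fun i => hb _) hM hnext
  have huI : u ∈ Icc (0 : ℝ) 1 := cfValue_mem_Icc fun i => ha _
  have hvI : v ∈ Icc (0 : ℝ) 1 := cfValue_mem_Icc fun i => hb _
  have ha_tail : cfValue a = cfMap a n (1 / (a n + u)) := by
    rw [cfValue_eq_cfMap ha n, cfValue_eq_one_div fun i => ha (n + i)]; rfl
  have hb_tail : cfValue b = cfMap a n (1 / (b n + v)) := by
    rw [cfValue_eq_cfMap hb n, cfValue_eq_one_div fun i => hb (n + i), cfMap_congr hab]; rfl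
  have hM1 : 1 / ((M : ℝ) + 1) ≤ 1 := by
    rw [div_le_one (by positivity)]
    linarith [Nat.cast_nonneg (α := ℝ) M]
  have hq : (1 : ℝ) ≤ continuant a n := by exact_mod_cast one_le_continuant ha n
  calc ((b n : ℝ) - a n) / (16 * (M + 1) * (continuant a n : ℝ) ^ 2 * (a n * b n))
      = 1 / ((M : ℝ) + 1) * (b n - a n) / (4 * (a n * b n)) / (4 * (continuant a n : ℝ) ^ 2) := by
        field_simp; ring
    _ ≤ |1 / ((a n : ℝ) + u) - 1 / (b n + v)| / (4 * (continuant a n : ℝ) ^ 2) := by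
        gcongr
        exact mul_sub_div_le_abs_one_div_sub han hbn huI hvI hM1 htail
    _ ≤ |cfValue a - cfValue b| := by
        rw [ha_tail, hb_tail]
        exact le_abs_cfMap_sub ha n (one_div_add_mem_Icc (ha n) huI.1)
          (one_div_add_mem_Icc (hb n) hvI.1)

/-! ### The expansion of an irrational number -/

lemma floor_one_div_eq_intFloor {x : ℝ} (hx : 0 < x) : (⌊1 / x⌋₊ : ℝ) = (⌊1 / x⌋ : ℤ) := by
  rw [← Int.cast_natCast, Int.natCast_floor_eq_floor (by positivity)]

lemma eq_one_div_floor_add_gaussMap {x : ℝ} (hx : 0 < x) : x = 1 / (⌊1 / x⌋₊ + gaussMap x) := by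
  rw [floor_one_div_eq_intFloor hx, gaussMap]
  simp

lemma gaussMap_mem_Ioo_and_irrational {x : ℝ} (hx : Irrational x) :
    gaussMap x ∈ Ioo (0 : ℝ) 1 ∧ Irrational (gaussMap x) := by
  have hirr : Irrational (gaussMap x) := by
    rw [gaussMap, one_div]
    exact (irrational_inv_iff.2 hx).sub_intCast _
  exact ⟨⟨lt_of_le_of_ne (sub_nonneg.2 (Int.floor_le _)) hirr.ne_zero.symm,
    Int.fract_lt_one (1 / x)⟩, hirr⟩

lemma gaussMap_iterate_mem_Ioo_and_irrational {x : ℝ} (hx : x ∈ Ioo (0 : ℝ) 1)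
    (hirr : Irrational x) (n : ℕ) :
    gaussMap^[n] x ∈ Ioo (0 : ℝ) 1 ∧ Irrational (gaussMap^[n] x) := by
  induction n with
  | zero => exact ⟨hx, hirr⟩
  | succ n ih =>
    rw [Function.iterate_succ_apply']
    exact gaussMap_mem_Ioo_and_irrational ih.2

lemma eq_cfMap_gaussMap_iterate {x : ℝ} (hx : x ∈ Ioo (0 : ℝ) 1) (hirr : Irrational x) (n : ℕ) :
    x = cfMap (fun i => pq x (i + 1)) n (gaussMap^[n] x) := by
  induction n with
  | zero => rfl
  | succ n ih =>
    rw [Function.iterate_succ_apply', cfMap]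
    refine ih.trans (congrArg _ ?_)
    exact eq_one_div_floor_add_gaussMap (gaussMap_iterate_mem_Ioo_and_irrational hx hirr n).1.1

lemma one_le_pq {x : ℝ} (hx : x ∈ Ioo (0 : ℝ) 1) (hirr : Irrational x) (n : ℕ) :
    1 ≤ pq x (n + 1) := by
  have hn := (gaussMap_iterate_mem_Ioo_and_irrational hx hirr n).1
  refine Nat.le_floor ?_
  rw [Nat.cast_one, Nat.add_sub_cancel, le_div_iff₀ hn.1]
  linarith [hn.2]

lemma pq_mul_gaussMap_iterate_le_one {x : ℝ} (hx : x ∈ Ioo (0 : ℝ) 1) (hirr : Irrational x)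
    (n : ℕ) : pq x (n + 1) * gaussMap^[n] x ≤ 1 := by
  have hn := (gaussMap_iterate_mem_Ioo_and_irrational hx hirr n).1.1
  rw [← le_div_iff₀ hn]
  exact Nat.floor_le (by positivity)

/-! ### Optimal digit exponents -/

/-- The exponent of the `i`-th digit in the optimal way of making a product of consecutive digits
large: `a_{n+i} ≈ B ^ (n * digitExp s f i)`, where `f` stands for `f_m(s)`. -/
noncomputable def digitExp (s f : ℝ) (i : ℕ) : ℝ := f / s * ((1 - s) / s) ^ i

/-- The exponent of the product of the first `i` large digits. -/
noncomputable def digitExpSum (s f : ℝ) (i : ℕ) : ℝ := ∑ j ∈ Finset.range i, digitExp s f j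

@[simp]
lemma digitExpSum_zero (s f : ℝ) : digitExpSum s f 0 = 0 := Finset.sum_range_zero _

lemma digitExpSum_succ (s f : ℝ) (i : ℕ) :
    digitExpSum s f (i + 1) = digitExpSum s f i + digitExp s f i :=
  Finset.sum_range_succ _ _

lemma digitExpSum_eq_mul (s f : ℝ) (i : ℕ) : digitExpSum s f i = f * digitExpSum s 1 i := by
  rw [digitExpSum, digitExpSum, Finset.mul_sum]
  exact Finset.sum_congr rfl fun j _ => by rw [digitExp, digitExp]; ring

lemma mul_digitExpSum_succ {s : ℝ} (hs : s ≠ 0) (f : ℝ) (i : ℕ) :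
    s * digitExpSum s f (i + 1) = f + (1 - s) * digitExpSum s f i := by
  simp only [digitExpSum, digitExp, ← Finset.mul_sum, geom_sum_succ]
  field_simp
  ring

lemma digitExp_pos {s f : ℝ} (hs : s ∈ Ioo (0 : ℝ) 1) (hf : 0 < f) (i : ℕ) :
    0 < digitExp s f i := by
  have hs0 := hs.1
  have hs1 := sub_pos.2 hs.2
  rw [digitExp]
  positivity

lemma digitExpSum_nonneg {s f : ℝ} (hs : s ∈ Ioo (0 : ℝ) 1) (hf : 0 < f) (i : ℕ) :
    0 ≤ digitExpSum s f i :=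
  Finset.sum_nonneg fun j _ => (digitExp_pos hs hf j).le

lemma digitExp_antitone {s f : ℝ} (hs : 1 / 2 ≤ s) (hs1 : s ≤ 1) (hf : 0 ≤ f) :
    Antitone (digitExp s f) := by
  have hs0 : 0 < s := by linarith
  intro i j hij
  refine mul_le_mul_of_nonneg_left ?_ (by positivity)
  exact pow_le_pow_of_le_one (div_nonneg (by linarith) hs0.le)
    ((div_le_one hs0).2 (by linarith)) hij

lemma fIter_pos {s : ℝ} (hs : s ∈ Ioo (0 : ℝ) 1) : ∀ k, 0 < fIter s k
  | 0 => hs.1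
  | k + 1 => div_pos (mul_pos hs.1 (fIter_pos hs k)) (by linarith [hs.2, fIter_pos hs k])

-- The recursion for `f_m` is designed to make the exponents of `m` consecutive digits sum to one.
lemma digitExpSum_fIter {s : ℝ} (hs : s ∈ Ioo (0 : ℝ) 1) :
    ∀ k, digitExpSum s (fIter s k) (k + 1) = 1
  | 0 => by simp [digitExpSum, digitExp, fIter, hs.1.ne']
  | k + 1 => by
    have hf := fIter_pos hs k
    have hden : 1 - s + fIter s k ≠ 0 := by linarith [hs.2]
    have hunit : digitExpSum s 1 (k + 1) = 1 / fIter s k := by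
      rw [eq_div_iff hf.ne', mul_comm, ← digitExpSum_eq_mul]
      exact digitExpSum_fIter hs k
    refine mul_left_cancel₀ hs.1.ne' ?_
    rw [mul_digitExpSum_succ hs.1.ne', digitExpSum_eq_mul, hunit, fIter]
    field_simp
    ring

lemma two_mul_sub_one_le_fIter {s : ℝ} (hs : s ∈ Ioo (0 : ℝ) 1) (k : ℕ) :
    2 * s - 1 ≤ fIter s k := by
  have hrec := mul_digitExpSum_succ hs.1.ne' (fIter s k) (k + 1)
  rw [digitExpSum_succ, digitExpSum_fIter hs] at hrec
  nlinarith [mul_pos hs.1 (digitExp_pos hs (fIter_pos hs k) (k + 1))]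

lemma digitExp_fIter_eq_inv {s : ℝ} (hs : s ∈ Ioo (0 : ℝ) 1) (k : ℕ) :
    digitExp s (fIter s k) k = (∑ i ∈ Finset.range (k + 1), (s / (1 - s)) ^ i)⁻¹ := by
  have hs0 : s ≠ 0 := hs.1.ne'
  have hs1 : 1 - s ≠ 0 := (sub_pos.2 hs.2).ne'
  refine eq_inv_of_mul_eq_one_left (Eq.trans ?_ (digitExpSum_fIter hs k))
  rw [digitExpSum, ← Finset.sum_range_reflect (digitExp s (fIter s k)), Finset.mul_sum]
  refine Finset.sum_congr rfl fun i hi => ?_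
  have hik : i ≤ k := Nat.lt_succ_iff.1 (Finset.mem_range.1 hi)
  have hpow : ((1 - s) / s) ^ k = ((1 - s) / s) ^ (k - i) * ((1 - s) / s) ^ i := by
    rw [← pow_add, Nat.sub_add_cancel hik]
  have hcancel : ((1 - s) / s) ^ i * (s / (1 - s)) ^ i = 1 := by
    rw [← mul_pow, div_mul_div_cancel₀ hs0, div_self hs1, one_pow]
  rw [Nat.add_sub_cancel, digitExp, digitExp, hpow]
  linear_combination (fIter s k / s * ((1 - s) / s) ^ (k - i)) * hcancel

lemma digitExp_fIter_strictAntiOn {k : ℕ} (hk : 1 ≤ k) :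
    StrictAntiOn (fun s => digitExp s (fIter s k) k) (Ioo 0 1) := by
  intro s hs t ht hst
  have hs1 := sub_pos.2 hs.2
  have ht1 := sub_pos.2 ht.2
  have hs0 := hs.1
  have hratio : s / (1 - s) < t / (1 - t) := by
    rw [div_lt_div_iff₀ hs1 ht1]
    linarith
  simp only [digitExp_fIter_eq_inv hs, digitExp_fIter_eq_inv ht]
  refine inv_strictAnti₀ (Finset.sum_pos (fun i _ => by positivity) (by simp)) ?_
  refine Finset.sum_lt_sum (fun i _ => by gcongr) ⟨1, Finset.mem_range.2 (by lia), ?_⟩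
  simpa using hratio

lemma theta_eq_one_sub_digitExp {t : ℝ} (ht : t ∈ Ioo (1 / 2 : ℝ) 1) (k : ℕ) :
    (t ^ (k + 1) - t * (1 - t) ^ k) / (t ^ (k + 1) - (1 - t) ^ (k + 1)) =
      1 - digitExp t (fIter t k) k := by
  obtain ⟨ht2, ht1⟩ := ht
  have hpos : 0 < 1 - t := by linarith
  have htwo : 2 * t - 1 ≠ 0 := by linarith
  have hden : t ^ (k + 1) - (1 - t) ^ (k + 1) ≠ 0 :=
    (sub_pos.2 (pow_lt_pow_left₀ (by linarith) hpos.le k.succ_ne_zero)).ne'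
  have hratio : t / (1 - t) - 1 = (2 * t - 1) / (1 - t) := by field_simp; ring
  have hsum : ∑ i ∈ Finset.range (k + 1), (t / (1 - t)) ^ i =
      (t ^ (k + 1) - (1 - t) ^ (k + 1)) / ((1 - t) ^ k * (2 * t - 1)) := by
    rw [geom_sum_eq (sub_ne_zero.1 (by rw [hratio]; positivity)), hratio, div_pow]
    field_simp
    ring
  rw [digitExp_fIter_eq_inv ⟨by linarith, ht1⟩, hsum, inv_div]
  field_simp
  ring

/-! ### Exponential growth rates and Hausdorff measure of limsup sets -/

lemma limsup_inv_mul_log_eq_expGrowthSup (u : ℕ → ℝ≥0∞) :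
    atTop.limsup (fun n : ℕ => (((n : ℝ)⁻¹ : ℝ) : EReal) * ENNReal.log (u n)) =
      ExpGrowth.expGrowthSup u := by
  refine congrArg (fun v => atTop.limsup v) (funext fun n => ?_)
  rw [EReal.div_eq_inv_mul, EReal.coe_inv, EReal.coe_natCast]

lemma exists_tsum_add_ne_top {u : ℕ → ℝ≥0∞} (hu : ExpGrowth.expGrowthSup u < 0) :
    ∃ N, ∑' n, u (N + n) ≠ ∞ := by
  obtain ⟨a, hua, ha⟩ := exists_between hu
  obtain ⟨N, hN⟩ := eventually_atTop.1 (ExpGrowth.eventually_le_exp hua)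
  have hexp : EReal.exp a < 1 := by rwa [EReal.exp_lt_one_iff]
  have hterm : ∀ n, u (N + n) ≤ EReal.exp a ^ n := fun n => by
    refine (hN (N + n) (Nat.le_add_right N n)).trans ?_
    rw [mul_comm, EReal.exp_nmul]
    exact pow_le_pow_of_le_one zero_le hexp.le (Nat.le_add_left n N)
  refine ⟨N, ne_top_of_le_ne_top ?_ (ENNReal.tsum_le_tsum hterm)⟩
  rw [ENNReal.tsum_geometric]
  exact ENNReal.inv_ne_top.2 (tsub_pos_of_lt hexp).ne'

lemma exists_lt_of_expGrowthSup_pos {u : ℕ → ℝ≥0∞} (hu : 0 < ExpGrowth.expGrowthSup u)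
    {K : ℝ≥0∞} (hK : K ≠ ∞) (N : ℕ) : ∃ n ≥ N, K < u n := by
  obtain ⟨a, ha, hau⟩ := exists_between hu
  have hexp : 1 < EReal.exp a := by rwa [EReal.one_lt_exp_iff]
  have hlarge := (ENNReal.tendsto_pow_atTop_nhds_top_iff.2 hexp).eventually (lt_mem_nhds hK.lt_top)
  obtain ⟨n, hn, hKn, hNn⟩ := ((ExpGrowth.frequently_exp_le hau).and_eventually
    (hlarge.and (eventually_ge_atTop N))).exists
  refine ⟨n, hNn, hKn.trans_le ?_⟩
  rwa [← EReal.exp_nmul, mul_comm]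

lemma hausdorffMeasure_setOf_frequently_cofinite_eq_zero {X ι : Type*} [EMetricSpace X]
    [MeasurableSpace X] [BorelSpace X] [Countable ι] {d : ℝ} (hd : 0 < d) {V : ι → Set X}
    (hV : ∑' i, Metric.ediam (V i) ^ d ≠ ∞) :
    Measure.hausdorffMeasure d {x | ∃ᶠ i in cofinite, x ∈ V i} = 0 := by
  have htail := ENNReal.tendsto_tsum_compl_atTop_zero hV
  have hcover (t : Finset ι) :
      {x | ∃ᶠ i in cofinite, x ∈ V i} ⊆ ⋃ i : {i // i ∉ t}, V i := fun x hx => by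
    obtain ⟨i, hxi, hi⟩ := (hx.and_eventually t.eventually_cofinite_notMem).exists
    exact mem_iUnion.2 ⟨⟨i, hi⟩, hxi⟩
  have hdiam (t : Finset ι) (i : {i // i ∉ t}) :
      Metric.ediam (V i) ≤ (∑' j : {j // j ∉ t}, Metric.ediam (V j) ^ d) ^ d⁻¹ := by
    rw [ENNReal.le_rpow_inv_iff hd]
    exact ENNReal.le_tsum (f := fun j : {j // j ∉ t} => Metric.ediam (V j) ^ d) i
  have hroot := (ENNReal.continuous_rpow_const (y := d⁻¹)).tendsto 0 |>.comp htail
  rw [ENNReal.zero_rpow_of_pos (inv_pos.2 hd)] at hroot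
  refine le_antisymm ?_ zero_le
  exact (Measure.hausdorffMeasure_le_liminf_tsum d _ _ hroot (fun t (i : {i // i ∉ t}) => V i)
    (Eventually.of_forall hdiam) (Eventually.of_forall hcover)).trans_eq htail.liminf_eq

lemma tsum_fin_pi_prod {α : Type*} (g : α → ℝ≥0∞) :
    ∀ i, ∑' b : Fin i → α, ∏ j, g (b j) = (∑' k, g k) ^ i
  | 0 => by simp
  | i + 1 => by
    rw [← (Fin.consEquiv fun _ => α).tsum_eq, ENNReal.tsum_prod', pow_succ', ← tsum_fin_pi_prod g i]
    simp [Fin.consEquiv, Fin.prod_univ_succ, ENNReal.tsum_mul_left, ENNReal.tsum_mul_right]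

lemma tsum_pnat_ofReal_rpow_ne_top {p : ℝ} (hp : p < -1) :
    ∑' k : ℕ+, ENNReal.ofReal ((k : ℝ) ^ p) ≠ ∞ :=
  ((Real.summable_nat_rpow.2 hp).comp_injective PNat.coe_injective).tsum_ofReal_ne_top

/-! ### The upper bound -/

/-- The `n`-th partition sum whose exponential growth rate defines `tExpM`; here `f` stands
for `f_m(s)`. -/
noncomputable def partitionSum (B s f : ℝ) (n : ℕ) : ℝ≥0∞ :=
  ∑' a : Fin n → ℕ+, ENNReal.ofReal (B ^ (-(n : ℝ) * f) *
    ((contQ n fun i => (a i : ℕ)) : ℝ) ^ (-(2 * s)))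

lemma tExpM_eq_sInf (B : ℝ) (m : ℕ) :
    tExpM B m = sInf {s : ℝ | 0 ≤ s ∧ s ≤ 1 ∧
      ExpGrowth.expGrowthSup (partitionSum B s (fIter s (m - 1))) ≤ 0} := by
  simp only [← limsup_inv_mul_log_eq_expGrowthSup]
  rfl

/-- The irrationals of `(0,1)` for which infinitely many products of `m` consecutive partial
quotients exceed `B ^ n`. -/
def largeProductSet (B : ℝ) (m : ℕ) : Set ℝ :=
  {x | x ∈ Ioo 0 1 ∧ Irrational x ∧
    {n : ℕ | B ^ n ≤ ∏ i ∈ Finset.range m, (pq x (n + i) : ℝ)}.Infinite}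

/-- The points whose continued fraction starts with the word `a` of length `n` followed by the word
`b` of length `i`, where `i` is critical: the product of the digits after `a` is at most
`B ^ (n * E_i)` for the `i` digits of `b`, and at least `B ^ (n * E_{i+1})` once the next digit is
included. Here `E` is `digitExpSum s f`. -/
def criticalCylinder (B s f : ℝ) {n i : ℕ} (a : Fin n → ℕ+) (b : Fin i → ℕ+) : Set ℝ :=
  {x | x ∈ Ioo 0 1 ∧ Irrational x ∧ (∀ j : Fin n, pq x (j + 1) = a j) ∧
    (∀ j : Fin i, pq x (n + j + 1) = b j) ∧ ∏ j, (b j : ℝ) ≤ B ^ (n * digitExpSum s f i) ∧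
    B ^ (n * digitExpSum s f (i + 1)) ≤ (∏ j, (b j : ℝ)) * pq x (n + i + 1)}

section criticalCylinder

variable {B s f : ℝ} {n i : ℕ} {a : Fin n → ℕ+} {b : Fin i → ℕ+}

lemma continuant_eq_contQ_of_mem_criticalCylinder {x : ℝ} (hx : x ∈ criticalCylinder B s f a b) :
    continuant (fun j => pq x (j + 1)) n = contQ n fun j => (a j : ℕ) := by
  rw [← contQ_eq_continuant]
  exact congrArg (contQ n) (funext hx.2.2.1)

lemma pq_eq_pq_of_mem_criticalCylinder {x y : ℝ} (hx : x ∈ criticalCylinder B s f a b)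
    (hy : y ∈ criticalCylinder B s f a b) {j : ℕ} (hj : j < n + i) :
    pq x (j + 1) = pq y (j + 1) := by
  rcases lt_or_ge j n with hjn | hjn
  · exact (hx.2.2.1 ⟨j, hjn⟩).trans (hy.2.2.1 ⟨j, hjn⟩).symm
  · obtain ⟨l, rfl⟩ := Nat.exists_eq_add_of_le hjn
    exact (hx.2.2.2.1 ⟨l, by lia⟩).trans (hy.2.2.2.1 ⟨l, by lia⟩).symm

lemma gaussMap_iterate_mem_Icc_of_mem_criticalCylinder (hB : 0 < B) {x : ℝ}
    (hx : x ∈ criticalCylinder B s f a b) :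
    gaussMap^[n + i] x ∈ Icc 0 ((∏ j, (b j : ℝ)) / B ^ (n * digitExpSum s f (i + 1))) := by
  obtain ⟨hxI, hirr, -, -, -, hprod⟩ := hx
  have hT := (gaussMap_iterate_mem_Ioo_and_irrational hxI hirr (n + i)).1.1.le
  refine ⟨hT, (le_div_iff₀ (Real.rpow_pos_of_pos hB _)).2 ?_⟩
  calc gaussMap^[n + i] x * B ^ (n * digitExpSum s f (i + 1))
      ≤ gaussMap^[n + i] x * ((∏ j, (b j : ℝ)) * pq x (n + i + 1)) := by gcongr
    _ = (∏ j, (b j : ℝ)) * (pq x (n + i + 1) * gaussMap^[n + i] x) := by ring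
    _ ≤ ∏ j, (b j : ℝ) := mul_le_of_le_one_right (by positivity)
        (pq_mul_gaussMap_iterate_le_one hxI hirr (n + i))

lemma ediam_criticalCylinder_le (hB : 0 < B) :
    Metric.ediam (criticalCylinder B s f a b) ≤
      ENNReal.ofReal (1 / ((contQ n fun j => (a j : ℕ) : ℝ) ^ 2 * (∏ j, (b j : ℝ)) *
        B ^ (n * digitExpSum s f (i + 1)))) := by
  refine Metric.ediam_le fun x hx y hy => ?_
  rw [edist_dist, Real.dist_eq]
  refine ENNReal.ofReal_le_ofReal ?_
  obtain ⟨hTx0, hTx⟩ := gaussMap_iterate_mem_Icc_of_mem_criticalCylinder hB hx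
  obtain ⟨hTy0, hTy⟩ := gaussMap_iterate_mem_Icc_of_mem_criticalCylinder hB hy
  have hq := continuant_eq_contQ_of_mem_criticalCylinder hx
  set A : ℕ → ℕ := fun j => pq x (j + 1)
  have hA : ∀ j, 1 ≤ A j := one_le_pq hx.1 hx.2.1
  have hxA : x = cfMap A (n + i) (gaussMap^[n + i] x) := eq_cfMap_gaussMap_iterate hx.1 hx.2.1 _
  have hyA : y = cfMap A (n + i) (gaussMap^[n + i] y) :=
    (eq_cfMap_gaussMap_iterate hy.1 hy.2.1 _).trans
      (cfMap_congr (fun j hj => pq_eq_pq_of_mem_criticalCylinder hy hx hj) _)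
  have hprod : ∏ j ∈ Finset.range i, (A (n + j) : ℝ) = ∏ j, (b j : ℝ) := by
    rw [Finset.prod_range]
    exact Finset.prod_congr rfl fun j _ => by exact_mod_cast hx.2.2.2.1 j
  have hcont : (contQ n fun j => (a j : ℕ) : ℝ) * ∏ j, (b j : ℝ) ≤ continuant A (n + i) := by
    rw [← hq, ← hprod]
    exact_mod_cast continuant_mul_prod_le A n i
  have hq0 : (0 : ℝ) < contQ n fun j => (a j : ℕ) := by
    rw [← hq]
    exact_mod_cast one_le_continuant hA n
  have hP0 : 0 < ∏ j, (b j : ℝ) := Finset.prod_pos fun j _ => by exact_mod_cast (b j).pos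
  set P := ∏ j, (b j : ℝ)
  set Y := B ^ (n * digitExpSum s f (i + 1))
  have hY0 : 0 < Y := Real.rpow_pos_of_pos hB _
  calc |x - y| ≤ |gaussMap^[n + i] x - gaussMap^[n + i] y| / (continuant A (n + i) : ℝ) ^ 2 := by
        conv_lhs => rw [hxA, hyA]
        exact abs_cfMap_sub_le hA _ hTx0 hTy0
    _ ≤ (P / Y) / ((contQ n fun j => (a j : ℕ) : ℝ) * P) ^ 2 := by
        gcongr
        exact abs_sub_le_iff.2 ⟨by linarith, by linarith⟩
    _ = _ := by field_simp

end criticalCylinder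

/-- The choice of critical index makes the covering sum at exponent `s` collapse to the partition
sum, whatever the critical index is. -/
lemma one_div_rpow_le_of_le_rpow_digitExpSum {B s f q P : ℝ} {n i : ℕ} (hB : 0 < B)
    (hs : s ∈ Ioo (0 : ℝ) 1) (hq : 0 < q) (hP : 0 < P) (hPB : P ≤ B ^ (n * digitExpSum s f i)) :
    (1 / (q ^ 2 * P * B ^ (n * digitExpSum s f (i + 1)))) ^ s ≤
      B ^ (-(n : ℝ) * f) * q ^ (-(2 * s)) * P⁻¹ := by
  have hexp : B ^ (n * digitExpSum s f i * (1 - s)) * B ^ (n * digitExpSum s f (i + 1) * -s) =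
      B ^ (-(n : ℝ) * f) := by
    rw [← Real.rpow_add hB]
    congr 1
    linear_combination (-(n : ℝ)) * mul_digitExpSum_succ hs.1.ne' f i
  have hPs : P ^ (-s) = P ^ (1 - s) * P⁻¹ := by
    rw [← Real.rpow_neg_one P, ← Real.rpow_add hP]
    ring_nf
  calc (1 / (q ^ 2 * P * B ^ (n * digitExpSum s f (i + 1)))) ^ s
      = q ^ (-(2 * s)) * P ^ (-s) * B ^ (n * digitExpSum s f (i + 1) * -s) := by
        rw [one_div, Real.inv_rpow (by positivity), ← Real.rpow_neg (by positivity),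
          Real.mul_rpow (by positivity) (by positivity), Real.mul_rpow (by positivity) hP.le,
          ← Real.rpow_natCast q, ← Real.rpow_mul hq.le, ← Real.rpow_mul hB.le]
        norm_num
    _ = q ^ (-(2 * s)) * (P ^ (1 - s) * P⁻¹) * B ^ (n * digitExpSum s f (i + 1) * -s) := by
        rw [hPs]
    _ ≤ q ^ (-(2 * s)) * (B ^ (n * digitExpSum s f i * (1 - s)) * P⁻¹) *
        B ^ (n * digitExpSum s f (i + 1) * -s) := by
        rw [Real.rpow_mul hB.le _ (1 - s)]
        gcongr
        exact sub_nonneg.2 hs.2.le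
    _ = _ := by rw [← hexp]; ring

lemma one_div_rpow_le_of_two_pow_le {q P Y η : ℝ} {n : ℕ} (hη : 0 ≤ η) (hq : 2 ^ n ≤ 2 * q ^ 2)
    (hP : 0 < P) (hY : 1 ≤ Y) :
    (1 / (q ^ 2 * P * Y)) ^ η ≤ 2 ^ η * ((1 / 2) ^ η) ^ n * P ^ (-η) := by
  have hn : (0 : ℝ) < 2 ^ n := by positivity
  have := one_pos.trans_le hY
  have hq0 : q ≠ 0 := by rintro rfl; linarith
  have hbase : 1 / (q ^ 2 * P * Y) ≤ 2 * (1 / 2) ^ n * P⁻¹ := by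
    rw [one_div_pow, div_le_iff₀ (by positivity)]
    field_simp
    nlinarith
  calc (1 / (q ^ 2 * P * Y)) ^ η ≤ (2 * (1 / 2) ^ n * P⁻¹) ^ η := by gcongr
    _ = _ := by
      rw [Real.mul_rpow (by positivity) (by positivity), Real.mul_rpow (by positivity)
        (by positivity), Real.inv_rpow hP.le, Real.rpow_neg hP.le, Real.rpow_pow_comm (by norm_num)]

section criticalCylinder

variable {B s f η : ℝ} {n i : ℕ}

lemma ediam_criticalCylinder_rpow_le (hB : 1 < B) (hs : s ∈ Ioo (0 : ℝ) 1) (hf : 0 < f)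
    (hη : 0 < η) (a : Fin n → ℕ+) (b : Fin i → ℕ+) :
    Metric.ediam (criticalCylinder B s f a b) ^ (s + η) ≤
      ENNReal.ofReal (2 ^ η) * ENNReal.ofReal ((1 / 2) ^ η) ^ n *
      ENNReal.ofReal (B ^ (-(n : ℝ) * f) * (contQ n fun j => (a j : ℕ) : ℝ) ^ (-(2 * s))) *
      ∏ j, ENNReal.ofReal ((b j : ℝ) ^ (-(1 + η))) := by
  have hs0 := hs.1
  rcases (criticalCylinder B s f a b).eq_empty_or_nonempty with hempty | ⟨x, hx⟩
  · simp [hempty, ENNReal.zero_rpow_of_pos (add_pos hs0 hη)]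
  have hA := one_le_pq hx.1 hx.2.1
  have hq := continuant_eq_contQ_of_mem_criticalCylinder hx
  have hq0 : (0 : ℝ) < contQ n fun j => (a j : ℕ) := by
    rw [← hq]
    exact_mod_cast one_le_continuant hA n
  have hq2 : (2 : ℝ) ^ n ≤ 2 * (contQ n fun j => (a j : ℕ) : ℝ) ^ 2 := by
    rw [← hq]
    exact_mod_cast two_pow_le_two_mul_continuant_sq hA n
  have hP0 : 0 < ∏ j, (b j : ℝ) := Finset.prod_pos fun j _ => by exact_mod_cast (b j).pos
  have hB0 : 0 < B := by linarith
  have hY : 1 ≤ B ^ (n * digitExpSum s f (i + 1)) :=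
    Real.one_le_rpow hB.le (mul_nonneg n.cast_nonneg (digitExpSum_nonneg hs hf _))
  have hmain := mul_le_mul (one_div_rpow_le_of_le_rpow_digitExpSum hB0 hs hq0 hP0 hx.2.2.2.2.1)
    (one_div_rpow_le_of_two_pow_le hη.le hq2 hP0 hY) (by positivity) (by positivity)
  rw [← Real.rpow_add (by positivity)] at hmain
  refine (ENNReal.rpow_le_rpow (ediam_criticalCylinder_le hB0) (by positivity)).trans ?_
  rw [ENNReal.ofReal_rpow_of_nonneg (by positivity) (by positivity)]
  refine (ENNReal.ofReal_le_ofReal hmain).trans_eq ?_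
  rw [← ENNReal.ofReal_prod_of_nonneg fun j _ => by positivity,
    ← ENNReal.ofReal_pow (by positivity), ← ENNReal.ofReal_mul (by positivity),
    ← ENNReal.ofReal_mul (by positivity), ← ENNReal.ofReal_mul (by positivity),
    Real.finsetProd_rpow _ _ fun j _ => by positivity, neg_add, Real.rpow_add hP0,
    Real.rpow_neg_one]
  ring_nf

lemma tsum_ediam_criticalCylinder_rpow_le (hB : 1 < B) (hs : s ∈ Ioo (0 : ℝ) 1) (hf : 0 < f)
    (hη : 0 < η) (n i : ℕ) :
    ∑' w : (Fin n → ℕ+) × (Fin i → ℕ+), Metric.ediam (criticalCylinder B s f w.1 w.2) ^ (s + η) ≤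
      ENNReal.ofReal (2 ^ η) * (∑' k : ℕ+, ENNReal.ofReal ((k : ℝ) ^ (-(1 + η)))) ^ i *
        (ENNReal.ofReal ((1 / 2) ^ η) ^ n * partitionSum B s f n) := by
  have hterm (w : (Fin n → ℕ+) × (Fin i → ℕ+)) :=
    ediam_criticalCylinder_rpow_le hB hs hf hη w.1 w.2
  refine (ENNReal.tsum_le_tsum hterm).trans_eq ?_
  rw [ENNReal.tsum_prod', ← tsum_fin_pi_prod]
  simp only [ENNReal.tsum_mul_left, ENNReal.tsum_mul_right]
  rw [partitionSum]
  ring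

lemma exists_mem_criticalCylinder {m : ℕ} (hm : 1 ≤ m) (hB : 1 < B) (hE : digitExpSum s f m = 1)
    {x : ℝ} (hx : x ∈ largeProductSet B m) (N : ℕ) :
    ∃ n ≥ N, ∃ i < m, ∃ (a : Fin n → ℕ+) (b : Fin i → ℕ+), x ∈ criticalCylinder B s f a b := by
  classical
  obtain ⟨hxI, hirr, hinf⟩ := hx
  obtain ⟨n', hn', hnN⟩ := hinf.exists_gt N
  obtain ⟨n, rfl⟩ : ∃ n, n' = n + 1 := ⟨n' - 1, by lia⟩
  have hlast : B ^ (n * digitExpSum s f (m - 1 + 1)) ≤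
      ∏ j ∈ Finset.range (m - 1 + 1), (pq x (n + j + 1) : ℝ) := by
    rw [Nat.sub_add_cancel hm, hE, mul_one, Real.rpow_natCast]
    refine (pow_le_pow_right₀ hB.le n.le_succ).trans (hn'.trans_eq ?_)
    exact Finset.prod_congr rfl fun j _ => by rw [Nat.add_right_comm]
  let P (i : ℕ) : Prop := B ^ (n * digitExpSum s f (i + 1)) ≤
    ∏ j ∈ Finset.range (i + 1), (pq x (n + j + 1) : ℝ)
  have hP : ∃ i, P i := ⟨m - 1, hlast⟩
  obtain ⟨i, him, hat, hbefore⟩ : ∃ i ≤ m - 1, P i ∧ ∀ j < i, ¬ P j :=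
    ⟨Nat.find hP, Nat.find_min' hP hlast, Nat.find_spec hP, fun _ => Nat.find_min hP⟩
  refine ⟨n, by lia, i, by lia, fun j => ⟨pq x (j + 1), one_le_pq hxI hirr j⟩,
    fun j => ⟨pq x (n + j + 1), one_le_pq hxI hirr (n + j)⟩, hxI, hirr, fun _ => rfl,
    fun _ => rfl, ?_, ?_⟩
  · simp only [PNat.mk_coe, ← Finset.prod_range fun j => (pq x (n + j + 1) : ℝ)]
    rcases i with _ | i
    · simp
    · exact (not_le.1 (hbefore i i.lt_succ_self)).le
  · simpa only [P, Finset.prod_range_succ, Finset.prod_range, PNat.mk_coe] using hat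

lemma hausdorffMeasure_largeProductSet_eq_zero {m : ℕ} (hm : 1 ≤ m) (hB : 1 < B)
    (hs : s ∈ Ioo (0 : ℝ) 1) (hη : 0 < η)
    (hgrowth : ExpGrowth.expGrowthSup (partitionSum B s (fIter s (m - 1))) ≤ 0) :
    Measure.hausdorffMeasure (s + η) (largeProductSet B m) = 0 := by
  set f := fIter s (m - 1)
  have hf : 0 < f := fIter_pos hs _
  have hE : digitExpSum s f m = 1 := by
    simpa only [Nat.sub_add_cancel hm] using digitExpSum_fIter hs (m - 1)
  set ρ : ℝ≥0∞ := ENNReal.ofReal ((1 / 2) ^ η)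
  have hρ : ρ < 1 := ENNReal.ofReal_lt_one.2 (Real.rpow_lt_one (by norm_num) (by norm_num) hη)
  have hρ0 : ρ ≠ 0 := (ENNReal.ofReal_pos.2 (by positivity)).ne'
  have hdecay : ExpGrowth.expGrowthSup ((ρ ^ ·) * partitionSum B s f) < 0 := by
    refine (ExpGrowth.expGrowthSup_mul_le (.inl ?_) (.inl ?_)).trans_lt
      ((add_le_add_right hgrowth _).trans_lt ?_) <;> rw [ExpGrowth.expGrowthSup_pow]
    · exact fun h => hρ0 (ENNReal.log_eq_bot_iff.1 h)
    · exact fun h => hρ.ne_top (ENNReal.log_eq_top_iff.1 h)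
    · rwa [add_zero, ENNReal.log_lt_zero_iff]
  obtain ⟨N, hN⟩ := exists_tsum_add_ne_top hdecay
  let V (p : Σ n : ℕ, Σ i : Fin m, (Fin (N + n) → ℕ+) × (Fin i → ℕ+)) : Set ℝ :=
    criticalCylinder B s f p.2.2.1 p.2.2.2
  have hsum : ∑' p, Metric.ediam (V p) ^ (s + η) ≠ ∞ := by
    set Z := ∑' k : ℕ+, ENNReal.ofReal ((k : ℝ) ^ (-(1 + η)))
    have hZ : Z ≠ ∞ := tsum_pnat_ofReal_rpow_ne_top (by linarith)
    have hK : ∑ i : Fin m, ENNReal.ofReal (2 ^ η) * Z ^ (i : ℕ) ≠ ∞ :=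
      ENNReal.sum_ne_top.2 fun i _ =>
        ENNReal.mul_ne_top ENNReal.ofReal_ne_top (ENNReal.pow_ne_top hZ)
    refine ne_top_of_le_ne_top (ENNReal.mul_ne_top hK hN) ?_
    rw [ENNReal.tsum_sigma', ← ENNReal.tsum_mul_left]
    refine ENNReal.tsum_le_tsum fun n => ?_
    rw [ENNReal.tsum_sigma', tsum_fintype, Finset.sum_mul]
    exact Finset.sum_le_sum fun i _ =>
      tsum_ediam_criticalCylinder_rpow_le hB hs hf hη (N + n) i
  refine measure_mono_null (fun x hx => ?_)
    (hausdorffMeasure_setOf_frequently_cofinite_eq_zero (add_pos hs.1 hη) hsum)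
  refine frequently_cofinite_iff_infinite.2 (.of_image Sigma.fst ?_)
  refine Set.infinite_of_forall_exists_gt fun k => ?_
  obtain ⟨n, hn, i, hi, a, b, hab⟩ := exists_mem_criticalCylinder hm hB hE hx (N + (k + 1))
  obtain ⟨l, rfl⟩ : ∃ l, n = N + (k + 1 + l) := ⟨n - (N + (k + 1)), by lia⟩
  exact ⟨k + 1 + l, ⟨⟨k + 1 + l, ⟨i, hi⟩, a, b⟩, hab, rfl⟩, by lia⟩

lemma dimH_largeProductSet_le {m : ℕ} (hm : 1 ≤ m) (hB : 1 < B) (hs : s ∈ Ioo (0 : ℝ) 1)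
    (hgrowth : ExpGrowth.expGrowthSup (partitionSum B s (fIter s (m - 1))) ≤ 0) :
    dimH (largeProductSet B m) ≤ ENNReal.ofReal s := by
  refine ENNReal.le_of_forall_pos_le_add fun η hη _ => ?_
  have hzero := hausdorffMeasure_largeProductSet_eq_zero hm hB hs (NNReal.coe_pos.2 hη) hgrowth
  rw [ENNReal.ofReal, ← ENNReal.coe_add]
  refine dimH_le_of_hausdorffMeasure_ne_top ?_
  rw [NNReal.coe_add, Real.coe_toNNReal _ hs.1.le, hzero]
  exact ENNReal.zero_ne_top

end criticalCylinder

/-! ### The Cantor set of the lower bound -/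

/-- The parameters of the Cantor subset: digits come in blocks of length `N`, those of an ordinary
block are at most `M`, and the partition sum of ordinary blocks is large. -/
structure CantorParams where
  /-- The base `B₁` of the theorem. -/
  B : ℝ
  /-- The lower bound on the dimension. -/
  s : ℝ
  /-- The number of consecutive digits whose product is to be large. -/
  m : ℕ
  /-- The block length. -/
  N : ℕ
  /-- The bound on the digits of ordinary blocks. -/
  M : ℕ
  one_lt_B : 1 < B
  half_lt_s : 1 / 2 < s
  s_lt_one : s < 1
  two_le_m : 2 ≤ m
  m_le_N : m ≤ N
  one_le_M : 1 ≤ M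
  le_sum : 8 * B ^ (N * fIter s (m - 1)) ≤
    ∑ w ∈ Fintype.piFinset fun _ : Fin N => Finset.Icc 1 M, (contQ N w : ℝ) ^ (-(2 * s))

namespace CantorParams

variable (c : CantorParams)

/-- The exponent `f_m(s)`. -/
noncomputable def f : ℝ := fIter c.s (c.m - 1)

lemma B_pos : 0 < c.B := one_pos.trans c.one_lt_B

lemma s_pos : 0 < c.s := by linarith [c.half_lt_s]

lemma s_mem : c.s ∈ Ioo (0 : ℝ) 1 := ⟨c.s_pos, c.s_lt_one⟩

lemma N_pos : 0 < c.N := two_pos.trans_le (c.two_le_m.trans c.m_le_N)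

lemma f_pos : 0 < c.f := fIter_pos c.s_mem _

lemma two_mul_sub_one_le_f : 2 * c.s - 1 ≤ c.f := two_mul_sub_one_le_fIter c.s_mem _

lemma digitExpSum_eq_one : digitExpSum c.s c.f c.m = 1 := by
  have h := digitExpSum_fIter c.s_mem (c.m - 1)
  rwa [Nat.sub_add_cancel (one_le_two.trans c.two_le_m)] at h

lemma one_le_rpow {y : ℝ} (hy : 0 ≤ y) : 1 ≤ c.B ^ y := Real.one_le_rpow c.one_lt_B.le hy

/-! ### Special blocks -/

/-- The distortion constant of a special block. -/
noncomputable def distortion : ℝ := 4 ^ c.N * 2 ^ c.m * c.B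

lemma two_le_distortion : 2 ≤ c.distortion := by
  have hN : (1 : ℝ) ≤ 4 ^ c.N := one_le_pow₀ (by norm_num)
  have hm : (2 : ℝ) ≤ 2 ^ c.m := le_self_pow₀ one_le_two (by have := c.two_le_m; lia)
  calc (2 : ℝ) = 1 * 2 * 1 := by norm_num
    _ ≤ _ := by
      rw [distortion]
      gcongr
      exact c.one_lt_B.le

/-- The factor by which a special block in position `k` increases the control sequence. -/
noncomputable def growthFactor (k : ℕ) : ℝ :=
  c.distortion * c.B ^ (((k * c.N : ℕ) : ℝ) * (2 * c.s - 1)) * c.B ^ (c.N * c.f)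

/-- An upper bound for `μ(I) * q ^ (2 * s) * B ^ (k * N * f)` over the cylinders `I` of the first
`k` blocks. Ordinary blocks halve it, and a special block is inserted as soon as it drops to one. -/
noncomputable def control : ℕ → ℝ
  | 0 => 1
  | k + 1 => if control k ≤ 1 then control k * c.growthFactor k else control k / 2

/-- The `k`-th block is special if its first `m` digits are to be large. -/
def IsSpecial (k : ℕ) : Prop := c.control k ≤ 1

lemma control_succ_of_isSpecial {k : ℕ} (h : c.IsSpecial k) :
    c.control (k + 1) = c.control k * c.growthFactor k :=
  if_pos h

lemma control_succ_of_not_isSpecial {k : ℕ} (h : ¬ c.IsSpecial k) :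
    c.control (k + 1) = c.control k / 2 :=
  if_neg h

lemma two_le_growthFactor (k : ℕ) : 2 ≤ c.growthFactor k := by
  have hk : 1 ≤ c.B ^ (((k * c.N : ℕ) : ℝ) * (2 * c.s - 1)) :=
    c.one_le_rpow (mul_nonneg (Nat.cast_nonneg _) (by linarith [c.half_lt_s]))
  have hf : 1 ≤ c.B ^ (c.N * c.f) := c.one_le_rpow (mul_nonneg (Nat.cast_nonneg _) c.f_pos.le)
  calc (2 : ℝ) = 2 * 1 * 1 := by norm_num
    _ ≤ _ := mul_le_mul (mul_le_mul c.two_le_distortion hk zero_le_one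
      (by linarith [c.two_le_distortion])) hf zero_le_one
      (mul_nonneg (by linarith [c.two_le_distortion]) (by linarith))

lemma half_lt_control (k : ℕ) : 1 / 2 < c.control k := by
  induction k with
  | zero => norm_num [control]
  | succ k ih =>
    by_cases h : c.IsSpecial k
    · rw [c.control_succ_of_isSpecial h]
      nlinarith [c.two_le_growthFactor k]
    · rw [c.control_succ_of_not_isSpecial h]
      linarith [not_le.1 h]

lemma control_pos (k : ℕ) : 0 < c.control k := one_half_pos.trans (c.half_lt_control k)

lemma IsSpecial.not_succ {c : CantorParams} {k : ℕ} (h : c.IsSpecial k) :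
    ¬ c.IsSpecial (k + 1) := by
  rw [IsSpecial, c.control_succ_of_isSpecial h, not_le]
  nlinarith [c.half_lt_control k, c.two_le_growthFactor k]

lemma infinite_setOf_isSpecial : {k | c.IsSpecial k}.Infinite := by
  refine Nat.frequently_atTop_iff_infinite.1 fun h => ?_
  obtain ⟨K, hK⟩ := eventually_atTop.1 h
  have hdecay : ∀ i, c.control (K + i) = c.control K * (1 / 2) ^ i := by
    intro i
    induction i with
    | zero => simp
    | succ i ih => rw [← add_assoc, c.control_succ_of_not_isSpecial (hK _ (by lia)), ih]; ring
  have hlim : Tendsto (fun i => c.control (K + i)) atTop (𝓝 0) := by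
    simpa [hdecay] using (tendsto_pow_atTop_nhds_zero_of_lt_one (r := (1 / 2 : ℝ))
      (by norm_num) (by norm_num)).const_mul (c.control K)
  obtain ⟨i, hi⟩ := (hlim.eventually_lt_const one_half_pos).exists
  exact hi.not_gt (c.half_lt_control _)

lemma control_mul_rpow_le (k : ℕ) :
    c.control k * c.B ^ (-((k * c.N : ℕ) : ℝ) * c.f) ≤ c.distortion := by
  have hB := c.B_pos
  have hpos := c.control_pos
  have hC : 0 ≤ c.distortion := by linarith [c.two_le_distortion]
  induction k with
  | zero => simpa [control] using one_le_two.trans c.two_le_distortion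
  | succ k ih =>
    by_cases h : c.IsSpecial k
    · have hcancel : c.B ^ (c.N * c.f) * c.B ^ (-(((k + 1) * c.N : ℕ) : ℝ) * c.f) =
          c.B ^ (-((k * c.N : ℕ) : ℝ) * c.f) := by
        rw [← Real.rpow_add hB]
        push_cast
        ring_nf
      have hle : c.B ^ (((k * c.N : ℕ) : ℝ) * (2 * c.s - 1)) *
          c.B ^ (-((k * c.N : ℕ) : ℝ) * c.f) ≤ 1 := by
        rw [← Real.rpow_add hB]
        refine Real.rpow_le_one_of_one_le_of_nonpos c.one_lt_B.le ?_
        nlinarith [c.two_mul_sub_one_le_f, Nat.cast_nonneg (α := ℝ) (k * c.N)]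
      calc _ = c.control k * c.distortion * (c.B ^ (((k * c.N : ℕ) : ℝ) * (2 * c.s - 1)) *
            c.B ^ (-((k * c.N : ℕ) : ℝ) * c.f)) := by
            rw [c.control_succ_of_isSpecial h, growthFactor, ← hcancel]
            ring
        _ ≤ 1 * c.distortion * 1 := by
            gcongr
            exact h
        _ = _ := by ring
    · rw [c.control_succ_of_not_isSpecial h]
      refine le_trans ?_ ih
      gcongr
      exacts [(hpos k).le, half_le_self (hpos k).le, c.one_lt_B.le, c.f_pos.le, Nat.le_succ k]

/-! ### Admissible digits -/

/-- The lower bound on the digit in place `i` of a special block in position `k`. -/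
noncomputable def digitSize (k i : ℕ) : ℕ :=
  if i < c.m then ⌈c.B ^ (((k * c.N + 1 : ℕ) : ℝ) * digitExp c.s c.f i)⌉₊ else 1

variable {c} {k i : ℕ}

lemma digitSize_of_lt (hi : i < c.m) :
    c.digitSize k i = ⌈c.B ^ (((k * c.N + 1 : ℕ) : ℝ) * digitExp c.s c.f i)⌉₊ := if_pos hi

lemma digitSize_of_not_lt (hi : ¬ i < c.m) : c.digitSize k i = 1 := if_neg hi

lemma one_lt_rpow_digitExp (c : CantorParams) (k i : ℕ) :
    1 < c.B ^ (((k * c.N + 1 : ℕ) : ℝ) * digitExp c.s c.f i) :=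
  Real.one_lt_rpow c.one_lt_B (mul_pos (by positivity) (digitExp_pos c.s_mem c.f_pos i))

lemma rpow_le_digitSize (hi : i < c.m) :
    c.B ^ (((k * c.N + 1 : ℕ) : ℝ) * digitExp c.s c.f i) ≤ c.digitSize k i := by
  rw [digitSize_of_lt hi]
  exact Nat.le_ceil _

lemma two_le_digitSize (hi : i < c.m) : 2 ≤ c.digitSize k i := by
  exact_mod_cast (c.one_lt_rpow_digitExp k i).trans_le (rpow_le_digitSize hi)

lemma one_le_digitSize (c : CantorParams) (k i : ℕ) : 1 ≤ c.digitSize k i := by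
  by_cases hi : i < c.m
  · exact one_le_two.trans (two_le_digitSize hi)
  · exact (digitSize_of_not_lt hi).ge

lemma digitSize_pos (c : CantorParams) (k i : ℕ) : (0 : ℝ) < c.digitSize k i := by
  exact_mod_cast c.one_le_digitSize k i

lemma digitSize_le (hi : i < c.m) :
    (c.digitSize k i : ℝ) ≤ 2 * c.B ^ (((k * c.N + 1 : ℕ) : ℝ) * digitExp c.s c.f i) := by
  have h := c.one_lt_rpow_digitExp k i
  have := Nat.ceil_lt_add_one (zero_le_one.trans h.le)
  rw [digitSize_of_lt hi]
  linarith

lemma prod_rpow_digitExp (c : CantorParams) (k i : ℕ) :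
    ∏ j ∈ Finset.range i, c.B ^ (((k * c.N + 1 : ℕ) : ℝ) * digitExp c.s c.f j) =
      c.B ^ (((k * c.N + 1 : ℕ) : ℝ) * digitExpSum c.s c.f i) := by
  rw [digitExpSum, Finset.mul_sum, Real.rpow_sum_of_pos c.B_pos]

lemma rpow_le_prod_digitSize (hi : i ≤ c.m) :
    c.B ^ (((k * c.N + 1 : ℕ) : ℝ) * digitExpSum c.s c.f i) ≤
      ∏ j ∈ Finset.range i, (c.digitSize k j : ℝ) := by
  have := c.B_pos
  rw [← prod_rpow_digitExp]
  exact Finset.prod_le_prod (fun j _ => by positivity) fun j hj =>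
    rpow_le_digitSize ((Finset.mem_range.1 hj).trans_le hi)

lemma prod_digitSize_le (hi : i ≤ c.m) :
    ∏ j ∈ Finset.range i, (c.digitSize k j : ℝ) ≤
      2 ^ i * c.B ^ (((k * c.N + 1 : ℕ) : ℝ) * digitExpSum c.s c.f i) := by
  rw [← prod_rpow_digitExp]
  calc _ ≤ ∏ j ∈ Finset.range i,
        2 * c.B ^ (((k * c.N + 1 : ℕ) : ℝ) * digitExp c.s c.f j) :=
        Finset.prod_le_prod (fun j _ => by positivity) fun j hj =>
          digitSize_le ((Finset.mem_range.1 hj).trans_le hi)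
    _ = _ := by simp [Finset.prod_mul_distrib]

lemma prod_range_N_digitSize (c : CantorParams) (k : ℕ) :
    ∏ j ∈ Finset.range c.N, (c.digitSize k j : ℝ) =
      ∏ j ∈ Finset.range c.m, (c.digitSize k j : ℝ) :=
  (Finset.prod_subset (Finset.range_mono c.m_le_N) fun j _ hj => by
    rw [digitSize_of_not_lt (by simpa using hj), Nat.cast_one]).symm

open Classical in
/-- The digits allowed in place `i` of the `k`-th block. -/
noncomputable def digitSet (c : CantorParams) (k i : ℕ) : Finset ℕ :=
  if c.IsSpecial k then Finset.Ico (c.digitSize k i) (2 * c.digitSize k i) else Finset.Icc 1 c.M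

lemma digitSet_of_isSpecial (hk : c.IsSpecial k) (i : ℕ) :
    c.digitSet k i = Finset.Ico (c.digitSize k i) (2 * c.digitSize k i) := if_pos hk

lemma digitSet_of_not_isSpecial (hk : ¬ c.IsSpecial k) (i : ℕ) :
    c.digitSet k i = Finset.Icc 1 c.M := if_neg hk

lemma one_le_of_mem_digitSet {d : ℕ} (hd : d ∈ c.digitSet k i) : 1 ≤ d := by
  by_cases hk : c.IsSpecial k
  · rw [digitSet_of_isSpecial hk, Finset.mem_Ico] at hd
    exact (c.one_le_digitSize k i).trans hd.1
  · rw [digitSet_of_not_isSpecial hk, Finset.mem_Icc] at hd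
    exact hd.1

lemma forall_two_le_or_forall_le (c : CantorParams) (k i : ℕ) :
    (∀ d ∈ c.digitSet k i, 2 ≤ d) ∨ ∀ d ∈ c.digitSet k i, d ≤ c.M := by
  by_cases hk : c.IsSpecial k
  · simp only [digitSet_of_isSpecial hk, Finset.mem_Ico]
    by_cases hi : i < c.m
    · exact .inl fun d hd => (two_le_digitSize hi).trans hd.1
    · have := c.one_le_M
      rw [digitSize_of_not_lt hi]
      exact .inr fun d hd => by lia
  · simp only [digitSet_of_not_isSpecial hk, Finset.mem_Icc]
    exact .inr fun d hd => hd.2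

end CantorParams

lemma infinitePi_setOf_forall_lt_eq_and_mem {X : ℕ → Type*} [∀ i, MeasurableSpace (X i)]
    [∀ i, MeasurableSingletonClass (X i)] (P : ∀ i, Measure (X i)) [∀ i, IsProbabilityMeasure (P i)]
    (τ : ∀ i, X i) (k : ℕ) {A : Set (X k)} (hA : MeasurableSet A) :
    Measure.infinitePi P {σ | (∀ j < k, σ j = τ j) ∧ σ k ∈ A} =
      (∏ j ∈ Finset.range k, P j {τ j}) * P k A := by
  let T : ∀ i, Set (X i) := fun j => {x | (j < k → x = τ j) ∧ ∀ h : j = k, h ▸ x ∈ A}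
  have hlt : ∀ j < k, T j = {τ j} := fun j hj => by
    ext x; simp [T, hj, hj.ne]
  have hTk : T k = A := by
    ext x; simp [T]
  have hbox : {σ | (∀ j < k, σ j = τ j) ∧ σ k ∈ A} =
      Set.pi (Finset.range (k + 1) : Set ℕ) T := by
    ext σ
    simp only [mem_ofPred_eq, Set.mem_pi, Finset.mem_coe, Finset.mem_range,
      Nat.forall_lt_succ_right, hTk]
    exact and_congr_left' (forall₂_congr fun j hj => by rw [hlt j hj, mem_singleton_iff])
  have hmeas : ∀ j ∈ Finset.range (k + 1), MeasurableSet (T j) := by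
    simp only [Finset.mem_range, Nat.forall_lt_succ_right, hTk]
    exact ⟨fun j hj => hlt j hj ▸ measurableSet_singleton _, hA⟩
  rw [hbox, Measure.infinitePi_pi _ hmeas, Finset.prod_range_succ, hTk]
  congr 1
  exact Finset.prod_congr rfl fun j hj => by rw [hlt j (Finset.mem_range.1 hj)]

namespace CantorParams

variable {c : CantorParams} {k i : ℕ} {σ : ℕ → Fin c.N → ℕ}

/-! ### Block sequences and the block weights -/

/-- The sequence of digits obtained by concatenating a sequence of blocks. -/
def digits (σ : ℕ → Fin c.N → ℕ) (p : ℕ) : ℕ := σ (p / c.N) ⟨p % c.N, Nat.mod_lt _ c.N_pos⟩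

lemma digits_mul_add (σ : ℕ → Fin c.N → ℕ) (k : ℕ) (i : Fin c.N) :
    digits σ (k * c.N + i) = σ k i := by
  have hdiv : (k * c.N + i) / c.N = k := by
    rw [mul_comm, Nat.mul_add_div c.N_pos, Nat.div_eq_of_lt i.2, add_zero]
  have hmod : (k * c.N + i) % c.N = i := by
    rw [mul_comm, Nat.mul_add_mod, Nat.mod_eq_of_lt i.2]
  simp only [digits, hdiv, hmod]

lemma contQ_eq_continuant_digits (σ : ℕ → Fin c.N → ℕ) (k : ℕ) :
    contQ c.N (σ k) = continuant (fun i => digits σ (k * c.N + i)) c.N := by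
  rw [← contQ_eq_continuant]
  exact congrArg _ (funext fun i => (digits_mul_add σ k i).symm)

/-- The words allowed as `k`-th block. -/
noncomputable def words (c : CantorParams) (k : ℕ) : Finset (Fin c.N → ℕ) :=
  Fintype.piFinset fun i => c.digitSet k i

/-- The block sequences whose values make up the Cantor set. -/
def admissible (c : CantorParams) : Set (ℕ → Fin c.N → ℕ) := {σ | ∀ k, σ k ∈ c.words k}

lemma digits_mem_digitSet (hσ : σ ∈ c.admissible) (k : ℕ) (hi : i < c.N) :
    digits σ (k * c.N + i) ∈ c.digitSet k i := by
  rw [digits_mul_add σ k ⟨i, hi⟩]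
  exact Fintype.mem_piFinset.1 (hσ k) ⟨i, hi⟩

lemma one_le_digits (hσ : σ ∈ c.admissible) (p : ℕ) : 1 ≤ digits σ p :=
  one_le_of_mem_digitSet (Fintype.mem_piFinset.1 (hσ _) _)

lemma one_le_continuant_digits (hσ : σ ∈ c.admissible) (n : ℕ) :
    (1 : ℝ) ≤ continuant (digits σ) n := by
  exact_mod_cast one_le_continuant (one_le_digits hσ) n

lemma continuant_digits_le (hσ : σ ∈ c.admissible) (hk : c.IsSpecial k) (hi : i ≤ c.N) :
    (continuant (digits σ) (k * c.N + i) : ℝ) ≤ continuant (digits σ) (k * c.N) *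
      (2 ^ i * ∏ j ∈ Finset.range i, (c.digitSize k j : ℝ)) := by
  have hdigits : ∏ j ∈ Finset.range i, (digits σ (k * c.N + j) + 1) ≤
      ∏ j ∈ Finset.range i, 2 * c.digitSize k j := by
    refine Finset.prod_le_prod' fun j hj => ?_
    have := digits_mem_digitSet hσ k ((Finset.mem_range.1 hj).trans_le hi)
    rw [digitSet_of_isSpecial hk, Finset.mem_Ico] at this
    exact this.2
  rw [Finset.prod_mul_distrib, Finset.prod_const, Finset.card_range] at hdigits
  exact_mod_cast (continuant_le_mul_prod (one_le_digits hσ) (k * c.N) i).trans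
    (Nat.mul_le_mul_left _ hdigits)

open Classical in
/-- The unnormalized weights of the words of the `k`-th block: special blocks are equidistributed,
ordinary ones are weighted as in the partition sum. -/
noncomputable def rawWeight (c : CantorParams) (k : ℕ) (w : Fin c.N → ℕ) : ℝ :=
  if c.IsSpecial k then 1 else (contQ c.N w : ℝ) ^ (-(2 * c.s))

/-- The weights of the words of the `k`-th block. -/
noncomputable def weight (c : CantorParams) (k : ℕ) (w : Fin c.N → ℕ) : ℝ :=
  c.rawWeight k w / ∑ v ∈ c.words k, c.rawWeight k v

lemma sum_rawWeight_of_isSpecial (hk : c.IsSpecial k) :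
    ∑ v ∈ c.words k, c.rawWeight k v = ∏ j ∈ Finset.range c.N, (c.digitSize k j : ℝ) := by
  simp [rawWeight, hk, words, Fintype.card_piFinset, digitSet_of_isSpecial, two_mul,
    Finset.prod_range]

lemma le_sum_rawWeight_of_not_isSpecial (hk : ¬ c.IsSpecial k) :
    8 * c.B ^ (c.N * c.f) ≤ ∑ v ∈ c.words k, c.rawWeight k v := by
  simpa only [rawWeight, hk, words, digitSet_of_not_isSpecial hk, if_false, f] using c.le_sum

lemma weight_of_isSpecial (hk : c.IsSpecial k) (w : Fin c.N → ℕ) :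
    c.weight k w = (∏ j ∈ Finset.range c.N, (c.digitSize k j : ℝ))⁻¹ := by
  rw [weight, sum_rawWeight_of_isSpecial hk, rawWeight, if_pos hk, one_div]

lemma sum_rawWeight_pos (c : CantorParams) (k : ℕ) :
    0 < ∑ v ∈ c.words k, c.rawWeight k v := by
  by_cases hk : c.IsSpecial k
  · rw [sum_rawWeight_of_isSpecial hk]
    exact Finset.prod_pos fun j _ => c.digitSize_pos k j
  · have := c.B_pos
    exact lt_of_lt_of_le (by positivity) (le_sum_rawWeight_of_not_isSpecial hk)

lemma weight_nonneg (c : CantorParams) (k : ℕ) (w : Fin c.N → ℕ) : 0 ≤ c.weight k w := by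
  refine div_nonneg ?_ (c.sum_rawWeight_pos k).le
  unfold rawWeight
  split_ifs <;> positivity

lemma weight_mul_rpow_le_of_isSpecial (hσ : σ ∈ c.admissible) (hk : c.IsSpecial k) :
    c.weight k (σ k) * (continuant (digits σ) ((k + 1) * c.N) : ℝ) ^ (2 * c.s) ≤
      (continuant (digits σ) (k * c.N) : ℝ) ^ (2 * c.s) *
        (c.distortion * c.B ^ (((k * c.N : ℕ) : ℝ) * (2 * c.s - 1))) := by
  have hB := c.B_pos
  have hs := c.half_lt_s
  have hs1 := c.s_lt_one
  set q := (continuant (digits σ) (k * c.N) : ℝ)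
  have hq : 0 < q := one_pos.trans_le (one_le_continuant_digits hσ _)
  set Y : ℝ := ∏ j ∈ Finset.range c.N, (c.digitSize k j : ℝ) with hY
  have hY0 : 0 < Y := Finset.prod_pos fun j _ => c.digitSize_pos k j
  have hY1 : Y ≤ 2 ^ c.m * (c.B * c.B ^ ((k * c.N : ℕ) : ℝ)) := by
    refine (hY.trans (c.prod_range_N_digitSize k)).trans_le
      ((prod_digitSize_le le_rfl).trans_eq ?_)
    rw [digitExpSum_eq_one, mul_one, Nat.cast_add_one, Real.rpow_add_one hB.ne', mul_comm c.B]
  have htwo : ((2 : ℝ) ^ c.N) ^ (2 * c.s) ≤ 4 ^ c.N := by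
    rw [Real.rpow_mul (by positivity), Real.rpow_two, ← pow_mul, mul_comm, pow_mul]
    norm_num
    exact Real.rpow_le_self_of_one_le (one_le_pow₀ (by norm_num)) hs1.le
  have hconst : (2 ^ c.m * c.B) ^ (2 * c.s - 1) ≤ 2 ^ c.m * c.B :=
    Real.rpow_le_self_of_one_le (one_le_mul_of_one_le_of_one_le (one_le_pow₀ one_le_two)
      c.one_lt_B.le) (by linarith)
  calc c.weight k (σ k) * (continuant (digits σ) ((k + 1) * c.N) : ℝ) ^ (2 * c.s)
      ≤ Y⁻¹ * (q * (2 ^ c.N * Y)) ^ (2 * c.s) := by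
        rw [weight_of_isSpecial hk, add_one_mul]
        gcongr
        exact continuant_digits_le hσ hk le_rfl
    _ = q ^ (2 * c.s) * ((2 ^ c.N) ^ (2 * c.s) * Y ^ (2 * c.s - 1)) := by
        rw [Real.mul_rpow hq.le (by positivity), Real.mul_rpow (by positivity) hY0.le,
          Real.rpow_sub_one hY0.ne']
        ring
    _ ≤ q ^ (2 * c.s) * (4 ^ c.N * ((2 ^ c.m * c.B) * c.B ^ (((k * c.N : ℕ) : ℝ) *
        (2 * c.s - 1)))) := by
        gcongr
        refine (Real.rpow_le_rpow hY0.le hY1 (by linarith)).trans ?_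
        rw [← mul_assoc, Real.mul_rpow (by positivity) (by positivity), ← Real.rpow_mul hB.le]
        gcongr
    _ = _ := by rw [distortion]; ring

lemma weight_mul_rpow_le_of_not_isSpecial (hσ : σ ∈ c.admissible) (hk : ¬ c.IsSpecial k) :
    c.weight k (σ k) * (continuant (digits σ) ((k + 1) * c.N) : ℝ) ^ (2 * c.s) ≤
      (continuant (digits σ) (k * c.N) : ℝ) ^ (2 * c.s) * (c.B ^ (-(c.N * c.f)) / 2) := by
  have hB := c.B_pos
  have hs := c.s_pos
  set q := (continuant (digits σ) (k * c.N) : ℝ) with hq_def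
  have hq : 0 < q := one_pos.trans_le (one_le_continuant_digits hσ _)
  set r := (contQ c.N (σ k) : ℝ) with hr
  have hr0 : 0 < r := by
    rw [hr, contQ_eq_continuant_digits]
    exact_mod_cast one_le_continuant (fun i => one_le_digits hσ _) c.N
  have hsplit : (continuant (digits σ) ((k + 1) * c.N) : ℝ) ≤ 2 * q * r := by
    rw [hr, hq_def, contQ_eq_continuant_digits, add_one_mul]
    exact_mod_cast continuant_add_le (one_le_digits hσ) (k * c.N) c.N
  have hfour : (2 : ℝ) ^ (2 * c.s) ≤ 4 := by
    rw [Real.rpow_mul zero_le_two]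
    norm_num
    exact Real.rpow_le_self_of_one_le (by norm_num) c.s_lt_one.le
  calc c.weight k (σ k) * (continuant (digits σ) ((k + 1) * c.N) : ℝ) ^ (2 * c.s)
      ≤ r ^ (-(2 * c.s)) / (8 * c.B ^ (c.N * c.f)) * (2 * q * r) ^ (2 * c.s) := by
        rw [weight, rawWeight, if_neg hk]
        gcongr
        exact le_sum_rawWeight_of_not_isSpecial hk
    _ = q ^ (2 * c.s) * (c.B ^ (-(c.N * c.f)) / 8 * 2 ^ (2 * c.s)) := by
        rw [Real.mul_rpow (by positivity) hr0.le, Real.mul_rpow zero_le_two hq.le,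
          Real.rpow_neg hr0.le, Real.rpow_neg hB.le]
        field_simp
    _ ≤ q ^ (2 * c.s) * (c.B ^ (-(c.N * c.f)) / 8 * 4) := by gcongr
    _ = _ := by ring

lemma prod_weight_mul_rpow_le (hσ : σ ∈ c.admissible) (k : ℕ) :
    (∏ j ∈ Finset.range k, c.weight j (σ j)) *
        (continuant (digits σ) (k * c.N) : ℝ) ^ (2 * c.s) ≤
      c.control k * c.B ^ (-((k * c.N : ℕ) : ℝ) * c.f) := by
  have hB := c.B_pos
  induction k with
  | zero => simp [control, continuant]
  | succ k ih =>
    have hexp : c.B ^ (-(((k + 1) * c.N : ℕ) : ℝ) * c.f) =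
        c.B ^ (-((k * c.N : ℕ) : ℝ) * c.f) * c.B ^ (-(c.N * c.f)) := by
      rw [← Real.rpow_add hB]
      push_cast
      ring_nf
    obtain ⟨F, hF0, hcontrol, hstep⟩ : ∃ F, 0 ≤ F ∧
        c.control (k + 1) * c.B ^ (-(c.N * c.f)) = c.control k * F ∧
        c.weight k (σ k) * (continuant (digits σ) ((k + 1) * c.N) : ℝ) ^ (2 * c.s) ≤
          (continuant (digits σ) (k * c.N) : ℝ) ^ (2 * c.s) * F := by
      by_cases hk : c.IsSpecial k
      · refine ⟨_, ?_, ?_, weight_mul_rpow_le_of_isSpecial hσ hk⟩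
        · exact mul_nonneg (by linarith [c.two_le_distortion]) (by positivity)
        · rw [c.control_succ_of_isSpecial hk, growthFactor, Real.rpow_neg hB.le]
          field_simp
      · refine ⟨_, by positivity, ?_, weight_mul_rpow_le_of_not_isSpecial hσ hk⟩
        rw [c.control_succ_of_not_isSpecial hk]
        ring
    calc _ = (∏ j ∈ Finset.range k, c.weight j (σ j)) * (c.weight k (σ k) *
          (continuant (digits σ) ((k + 1) * c.N) : ℝ) ^ (2 * c.s)) := by
          rw [Finset.prod_range_succ, mul_assoc]
      _ ≤ (∏ j ∈ Finset.range k, c.weight j (σ j)) *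
          ((continuant (digits σ) (k * c.N) : ℝ) ^ (2 * c.s) * F) := by
          gcongr
          exact Finset.prod_nonneg fun j _ => c.weight_nonneg j _
      _ ≤ c.control k * c.B ^ (-((k * c.N : ℕ) : ℝ) * c.f) * F := by
          rw [← mul_assoc]
          gcongr
      _ = _ := by
          rw [hexp]
          linear_combination (-c.B ^ (-((k * c.N : ℕ) : ℝ) * c.f)) * hcontrol

lemma prod_weight_mul_rpow_le_distortion (hσ : σ ∈ c.admissible) (k : ℕ) :
    (∏ j ∈ Finset.range k, c.weight j (σ j)) *
      (continuant (digits σ) (k * c.N) : ℝ) ^ (2 * c.s) ≤ c.distortion :=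
  (prod_weight_mul_rpow_le hσ k).trans (c.control_mul_rpow_le k)

end CantorParams

namespace CantorParams

variable {c : CantorParams} {k i : ℕ}

/-! ### The measure on block sequences -/

/-- The distribution of the `k`-th block. -/
noncomputable def blockMeasure (c : CantorParams) (k : ℕ) : Measure (Fin c.N → ℕ) :=
  ∑ w ∈ c.words k, ENNReal.ofReal (c.weight k w) • Measure.dirac w

lemma blockMeasure_apply (c : CantorParams) (k : ℕ) (A : Set (Fin c.N → ℕ)) :
    c.blockMeasure k A = ∑ w ∈ c.words k, ENNReal.ofReal (c.weight k w) * A.indicator 1 w := by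
  simp [blockMeasure, Measure.finsetSum_apply]

instance : IsProbabilityMeasure (c.blockMeasure k) := by
  constructor
  rw [blockMeasure_apply]
  simp only [indicator_univ, Pi.one_apply, mul_one]
  rw [← ENNReal.ofReal_sum_of_nonneg fun w _ => c.weight_nonneg k w]
  simp [weight, ← Finset.sum_div, (c.sum_rawWeight_pos k).ne']

lemma blockMeasure_le_sum {A : Set (Fin c.N → ℕ)} {F : Finset (Fin c.N → ℕ)}
    (hF : ∀ w ∈ c.words k, w ∈ A → w ∈ F) :
    c.blockMeasure k A ≤ ∑ w ∈ F, ENNReal.ofReal (c.weight k w) := by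
  classical
  rw [blockMeasure_apply]
  simp only [indicator_apply, Pi.one_apply, mul_ite, mul_one, mul_zero, ← Finset.sum_filter]
  exact Finset.sum_le_sum_of_subset fun w hw =>
    hF w (Finset.mem_filter.1 hw).1 (Finset.mem_filter.1 hw).2

lemma blockMeasure_singleton_le (c : CantorParams) (k : ℕ) (w : Fin c.N → ℕ) :
    c.blockMeasure k {w} ≤ ENNReal.ofReal (c.weight k w) :=
  (blockMeasure_le_sum (F := {w}) (by simp)).trans_eq (Finset.sum_singleton _ _)

lemma ae_blockMeasure_mem_words (c : CantorParams) (k : ℕ) :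
    ∀ᵐ w ∂c.blockMeasure k, w ∈ c.words k := by
  rw [ae_iff, blockMeasure_apply]
  exact Finset.sum_eq_zero fun w hw => by simp [hw]

lemma sum_weight_piFinset (hk : c.IsSpecial k) (S : Fin c.N → Finset ℕ) :
    ∑ w ∈ Fintype.piFinset S, c.weight k w =
      ∏ j : Fin c.N, ((S j).card : ℝ) / c.digitSize k j := by
  simp [weight_of_isSpecial hk, Fintype.card_piFinset, div_eq_mul_inv,
    Finset.prod_mul_distrib, Finset.prod_range]

lemma blockMeasure_box_le (hk : c.IsSpecial k) (hi : i < c.N) (v : Fin c.N → ℕ) (D : Finset ℕ) :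
    c.blockMeasure k {w | (∀ j : Fin c.N, (j : ℕ) < i → w j = v j) ∧ w ⟨i, hi⟩ ∈ D} ≤
      ENNReal.ofReal ((∏ j ∈ Finset.range i, (c.digitSize k j : ℝ))⁻¹ *
        (D.card / c.digitSize k i)) := by
  let S : Fin c.N → Finset ℕ := fun j =>
    if (j : ℕ) < i then {v j} else if (j : ℕ) = i then D else c.digitSet k j
  let r : ℕ → ℝ := fun j => if j < i then (c.digitSize k j : ℝ)⁻¹ else
    if j = i then D.card / c.digitSize k i else 1
  have hcard : ∀ j : Fin c.N, ((S j).card : ℝ) / c.digitSize k j = r j := by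
    intro j
    have := (c.digitSize_pos k j).ne'
    rcases lt_trichotomy (j : ℕ) i with hj | hj | hj
    · simp [S, r, hj]
    · simp [S, r, hj]
    · simp [S, r, hj.not_gt, hj.ne', digitSet_of_isSpecial hk, two_mul, this]
  have hsub : ∀ w ∈ c.words k, ((∀ j : Fin c.N, (j : ℕ) < i → w j = v j) ∧ w ⟨i, hi⟩ ∈ D) →
      w ∈ Fintype.piFinset S := by
    rintro w hw ⟨hlt, heq⟩
    refine Fintype.mem_piFinset.2 fun j => ?_
    rcases lt_trichotomy (j : ℕ) i with hj | rfl | hj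
    · simpa [S, hj] using hlt j hj
    · simpa [S] using heq
    · simpa [S, hj.not_gt, hj.ne'] using Fintype.mem_piFinset.1 hw j
  refine (blockMeasure_le_sum hsub).trans_eq ?_
  rw [← ENNReal.ofReal_sum_of_nonneg fun w _ => c.weight_nonneg k w]
  congr 1
  calc ∑ w ∈ Fintype.piFinset S, c.weight k w
      = ∏ j : Fin c.N, ((S j).card : ℝ) / c.digitSize k j := sum_weight_piFinset hk S
    _ = ∏ j ∈ Finset.range c.N, r j := by
        rw [Finset.prod_range]
        exact Finset.prod_congr rfl fun j _ => hcard j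
    _ = ∏ j ∈ Finset.range (i + 1), r j := by
        refine (Finset.prod_subset (Finset.range_mono hi) fun j _ hj => ?_).symm
        have hij : i < j := by simpa using hj
        simp [r, hij.not_gt, hij.ne']
    _ = _ := by
        rw [Finset.prod_range_succ, ← Finset.prod_inv_distrib]
        simp only [r, lt_irrefl, if_false, if_true]
        congr 1
        exact Finset.prod_congr rfl fun j hj => if_pos (Finset.mem_range.1 hj)

/-- The measure carried by the Cantor set, on the space of block sequences. -/
noncomputable def cantorMeasure (c : CantorParams) : Measure (ℕ → Fin c.N → ℕ) :=
  Measure.infinitePi c.blockMeasure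

instance : IsProbabilityMeasure c.cantorMeasure :=
  inferInstanceAs (IsProbabilityMeasure (Measure.infinitePi c.blockMeasure))

lemma ae_mem_admissible (c : CantorParams) : ∀ᵐ σ ∂c.cantorMeasure, σ ∈ c.admissible :=
  ae_all_iff.2 fun k =>
    (measurePreserving_eval_infinitePi c.blockMeasure k).quasiMeasurePreserving.ae
      (c.ae_blockMeasure_mem_words k)

lemma cantorMeasure_cylinder_le (τ : ℕ → Fin c.N → ℕ) (k : ℕ) (A : Set (Fin c.N → ℕ)) :
    c.cantorMeasure {σ | (∀ j < k, σ j = τ j) ∧ σ k ∈ A} ≤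
      ENNReal.ofReal (∏ j ∈ Finset.range k, c.weight j (τ j)) * c.blockMeasure k A := by
  rw [cantorMeasure, infinitePi_setOf_forall_lt_eq_and_mem _ _ _ (to_countable A).measurableSet,
    ENNReal.ofReal_prod_of_nonneg fun j _ => c.weight_nonneg j _]
  gcongr
  exact c.blockMeasure_singleton_le _ _

/-- The point of `[0, 1]` coded by a block sequence. -/
noncomputable def code (σ : ℕ → Fin c.N → ℕ) : ℝ := cfValue (digits σ)

lemma measurable_code : Measurable (code (c := c)) :=
  measurable_cfValue.comp (measurable_pi_iff.2 fun p => by unfold digits; fun_prop)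

end CantorParams

/-- Up to a constant, the distance between the values of two digit sequences that differ for the
first time in place `n`, see `le_abs_cfValue_sub_cfValue`. -/
noncomputable def digitGap (a b : ℕ → ℕ) (n : ℕ) : ℝ :=
  ((b n : ℝ) - a n) / ((continuant a n : ℝ) ^ 2 * (a n * b n))

lemma digitGap_nonneg {a b : ℕ → ℕ} {n : ℕ} (h : a n ≤ b n) : 0 ≤ digitGap a b n := by
  have : (0 : ℝ) ≤ b n - a n := sub_nonneg.2 (by exact_mod_cast h)
  unfold digitGap
  positivity

lemma sub_le_mul_digitGap {a b : ℕ → ℕ} {n : ℕ} {P Q : ℝ} (ha : ∀ i, 1 ≤ a i) (hlt : a n < b n)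
    (hP : (continuant a n : ℝ) ≤ P) (hQ : (b n : ℝ) ≤ Q) :
    (b n : ℝ) - a n ≤ P ^ 2 * Q ^ 2 * digitGap a b n := by
  have hq : (0 : ℝ) < continuant a n := by exact_mod_cast one_le_continuant ha n
  have ha0 : (0 : ℝ) < a n := by exact_mod_cast ha n
  have hab : (a n : ℝ) < b n := by exact_mod_cast hlt
  have hb0 := ha0.trans hab
  calc (b n : ℝ) - a n
      = (continuant a n : ℝ) ^ 2 * (a n * b n) * digitGap a b n := by
        unfold digitGap
        field_simp
    _ ≤ P ^ 2 * (Q * Q) * digitGap a b n := by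
        have := digitGap_nonneg hlt.le
        gcongr
        exacts [ha0.le.trans (hab.le.trans hQ), hab.le.trans hQ]
    _ = _ := by ring

lemma sq_rpow {x : ℝ} (hx : 0 ≤ x) (s : ℝ) : (x ^ 2) ^ s = x ^ (2 * s) := by
  rw [Real.rpow_mul hx, Real.rpow_two]

lemma le_mul_rpow_of_one_le_mul {A C H R q s : ℝ} (hs : 0 ≤ s) (hA : 0 ≤ A) (hq : 0 ≤ q)
    (hH : 0 ≤ H) (hR : 0 ≤ R) (hone : 1 ≤ (q * H) ^ 2 * R) (h : A * q ^ (2 * s) ≤ C) :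
    A ≤ C * H ^ (2 * s) * R ^ s := by
  calc A ≤ A * ((q * H) ^ 2 * R) ^ s := le_mul_of_one_le_right hA (Real.one_le_rpow hone hs)
    _ = A * q ^ (2 * s) * (H ^ (2 * s) * R ^ s) := by
      rw [Real.mul_rpow (by positivity) hR, mul_pow, Real.mul_rpow (by positivity) (by positivity),
        sq_rpow hq, sq_rpow hH]
      ring
    _ ≤ C * (H ^ (2 * s) * R ^ s) := by gcongr
    _ = _ := by ring

lemma mul_inv_mul_div_le {A K L R Y d q s x : ℝ} (hs : 0 ≤ s) (hs1 : s ≤ 1) (hA : 0 ≤ A)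
    (hq : 0 < q) (hY : 0 < Y) (hL : 0 ≤ L) (hR : 0 ≤ R) (hd : 1 ≤ d) (hdx : d + 1 ≤ x)
    (hgap : d ≤ L * (q * Y) ^ 2 * x ^ 2 * R)
    (h : A * q ^ (2 * s) * (Y ^ (2 * s - 1) * x ^ s) ≤ K) :
    A * (Y⁻¹ * ((d + 1) / x)) ≤ (2 * L) ^ s * K * R ^ s := by
  have hx : 0 < x := by linarith
  have hle : (d + 1) / x ≤ (2 * L * (q ^ 2 * Y ^ 2 * x * R)) ^ s := by
    refine (Real.self_le_rpow_of_le_one (by positivity) ((div_le_one hx).2 hdx) hs1).trans ?_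
    refine Real.rpow_le_rpow (by positivity) ?_ hs
    rw [div_le_iff₀ hx]
    linear_combination 2 * hgap + hd
  calc A * (Y⁻¹ * ((d + 1) / x)) ≤ A * (Y⁻¹ * (2 * L * (q ^ 2 * Y ^ 2 * x * R)) ^ s) := by gcongr
    _ = (2 * L) ^ s * (A * q ^ (2 * s) * (Y ^ (2 * s - 1) * x ^ s)) * R ^ s := by
      rw [Real.mul_rpow (by positivity) (by positivity), Real.mul_rpow (by positivity) hR,
        Real.mul_rpow (by positivity) hx.le, Real.mul_rpow (sq_nonneg q) (sq_nonneg Y),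
        sq_rpow hq.le, sq_rpow hY.le, Real.rpow_sub_one hY.ne']
      ring
    _ ≤ _ := by gcongr

namespace CantorParams

variable {c : CantorParams} {k i n : ℕ} {σ τ α β : ℕ → Fin c.N → ℕ}

/-! ### The mass distribution estimate -/

lemma continuant_digits_le_of_not_isSpecial (hσ : σ ∈ c.admissible) (hk : ¬ c.IsSpecial k)
    (hi : i < c.N) :
    (continuant (digits σ) (k * c.N + i) : ℝ) ≤
      continuant (digits σ) (k * c.N) * (c.M + 1) ^ c.N := by
  have hdigits : ∏ j ∈ Finset.range i, (digits σ (k * c.N + j) + 1) ≤ (c.M + 1) ^ c.N := by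
    calc _ ≤ ∏ j ∈ Finset.range i, (c.M + 1) := by
          refine Finset.prod_le_prod' fun j hj => Nat.succ_le_succ ?_
          have := digits_mem_digitSet hσ k ((Finset.mem_range.1 hj).trans hi)
          rw [digitSet_of_not_isSpecial hk, Finset.mem_Icc] at this
          exact this.2
      _ ≤ _ := by
          rw [Finset.prod_const, Finset.card_range]
          exact Nat.pow_le_pow_right (Nat.succ_pos _) hi.le
  exact_mod_cast (continuant_le_mul_prod (one_le_digits hσ) (k * c.N) i).trans
    (Nat.mul_le_mul_left _ hdigits)

lemma rpow_prod_digitSize_mul_rpow_le (hi : i < c.m) :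
    (∏ j ∈ Finset.range i, (c.digitSize k j : ℝ)) ^ (2 * c.s - 1) *
        (c.digitSize k i : ℝ) ^ c.s ≤
      2 ^ (c.N + 1) * c.B ^ c.f * c.B ^ (((k * c.N : ℕ) : ℝ) * c.f) := by
  have hB := c.B_pos
  have hs := c.half_lt_s
  have hs1 := c.s_lt_one
  set y : ℝ := ((k * c.N + 1 : ℕ) : ℝ) with hy
  set E := digitExpSum c.s c.f i
  set e := digitExp c.s c.f i
  have hprod : (∏ j ∈ Finset.range i, (c.digitSize k j : ℝ)) ^ (2 * c.s - 1) ≤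
      2 ^ i * c.B ^ (y * E * (2 * c.s - 1)) := by
    refine (Real.rpow_le_rpow (by positivity) (prod_digitSize_le hi.le) (by linarith)).trans ?_
    rw [Real.mul_rpow (by positivity) (by positivity), ← Real.rpow_mul hB.le]
    gcongr
    exact Real.rpow_le_self_of_one_le (one_le_pow₀ one_le_two) (by linarith)
  have hdigit : (c.digitSize k i : ℝ) ^ c.s ≤ 2 * c.B ^ (y * e * c.s) := by
    refine (Real.rpow_le_rpow (by positivity) (digitSize_le hi) c.s_pos.le).trans ?_
    rw [Real.mul_rpow (by positivity) (by positivity), ← Real.rpow_mul hB.le]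
    gcongr
    exact Real.rpow_le_self_of_one_le one_le_two hs1.le
  have hexp : y * E * (2 * c.s - 1) + y * e * c.s = c.f + ((k * c.N : ℕ) : ℝ) * c.f := by
    have h := mul_digitExpSum_succ c.s_pos.ne' c.f i
    rw [digitExpSum_succ] at h
    rw [hy, Nat.cast_add_one]
    linear_combination (((k * c.N : ℕ) : ℝ) + 1) * h
  calc _ ≤ (2 ^ i * c.B ^ (y * E * (2 * c.s - 1))) * (2 * c.B ^ (y * e * c.s)) := by gcongr
    _ = 2 ^ (i + 1) * (c.B ^ c.f * c.B ^ (((k * c.N : ℕ) : ℝ) * c.f)) := by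
        rw [← Real.rpow_add hB, ← hexp, Real.rpow_add hB]
        ring
    _ ≤ 2 ^ (c.N + 1) * (c.B ^ c.f * c.B ^ (((k * c.N : ℕ) : ℝ) * c.f)) := by
        gcongr
        exacts [one_le_two, hi.le.trans c.m_le_N]
    _ = _ := by ring

/-- The block sequences that agree with `α` before place `n` and whose digit in place `n` is between
those of `α` and `β`. -/
def digitStrip (α β : ℕ → Fin c.N → ℕ) (n : ℕ) : Set (ℕ → Fin c.N → ℕ) :=
  {σ | (∀ p < n, digits σ p = digits α p) ∧ digits σ n ∈ Finset.Icc (digits α n) (digits β n)}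

lemma eq_of_digits_eq (h : ∀ p < k * c.N, digits σ p = digits τ p) {j : ℕ} (hj : j < k) :
    σ j = τ j := by
  funext l
  rw [← digits_mul_add σ, ← digits_mul_add τ]
  exact h _ (by nlinarith [l.2])

/-- The constant of the mass estimate at a digit of an ordinary block. -/
noncomputable def ordinaryConst (c : CantorParams) : ℝ :=
  c.distortion * ((c.M + 1) ^ c.N * c.M) ^ (2 * c.s)

/-- The constant of the mass estimate at a digit of a special block. -/
noncomputable def specialConst (c : CantorParams) : ℝ :=
  (8 * 4 ^ c.N) ^ c.s * (2 ^ (c.N + 1) * c.B ^ c.f)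

lemma cantorMeasure_digitStrip_le_of_not_isSpecial (hk : ¬ c.IsSpecial k) (hi : i < c.N)
    (hα : α ∈ c.admissible) (hβ : β ∈ c.admissible)
    (hlt : digits α (k * c.N + i) < digits β (k * c.N + i)) :
    c.cantorMeasure (digitStrip α β (k * c.N + i)) ≤
      ENNReal.ofReal (c.ordinaryConst * digitGap (digits α) (digits β) (k * c.N + i) ^ c.s) := by
  set n := k * c.N + i
  have hq := zero_le_one.trans (one_le_continuant_digits hα (k * c.N))
  have hgap : 1 ≤ ((continuant (digits α) (k * c.N) : ℝ) * ((c.M + 1) ^ c.N * c.M)) ^ 2 *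
      digitGap (digits α) (digits β) n := by
    have hβM : digits β n ≤ c.M := by
      have := digits_mem_digitSet hβ k hi
      rw [digitSet_of_not_isSpecial hk, Finset.mem_Icc] at this
      exact this.2
    have hone : (1 : ℝ) ≤ digits β n - digits α n := by
      rw [le_sub_iff_add_le']
      exact_mod_cast hlt
    refine (hone.trans (sub_le_mul_digitGap (one_le_digits hα) hlt
      (continuant_digits_le_of_not_isSpecial hα hk hi)
      (Nat.cast_le.2 hβM))).trans_eq ?_
    ring
  calc c.cantorMeasure (digitStrip α β n)
      ≤ c.cantorMeasure {σ | (∀ j < k, σ j = α j) ∧ σ k ∈ univ} :=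
        measure_mono fun σ hσ =>
          ⟨fun j => eq_of_digits_eq fun p hp => hσ.1 p (by lia), mem_univ _⟩
    _ ≤ ENNReal.ofReal (∏ j ∈ Finset.range k, c.weight j (α j)) := by
        simpa using cantorMeasure_cylinder_le α k univ
    _ ≤ _ := ENNReal.ofReal_le_ofReal <| le_mul_rpow_of_one_le_mul c.s_pos.le
        (Finset.prod_nonneg fun j _ => c.weight_nonneg j _) hq (by positivity)
        (digitGap_nonneg hlt.le) hgap (prod_weight_mul_rpow_le_distortion hα k)

lemma digits_sub_digits_le (hk : c.IsSpecial k) (hi : i < c.N)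
    (hα : α ∈ c.admissible) (hβ : β ∈ c.admissible)
    (hlt : digits α (k * c.N + i) < digits β (k * c.N + i)) :
    (digits β (k * c.N + i) : ℝ) - digits α (k * c.N + i) ≤
      4 * 4 ^ c.N * (continuant (digits α) (k * c.N) *
        ∏ j ∈ Finset.range i, (c.digitSize k j : ℝ)) ^ 2 * c.digitSize k i ^ 2 *
          digitGap (digits α) (digits β) (k * c.N + i) := by
  have hβd := digits_mem_digitSet hβ k hi
  rw [digitSet_of_isSpecial hk, Finset.mem_Ico] at hβd
  have hR := digitGap_nonneg hlt.le
  have hfour : (2 ^ i : ℝ) ^ 2 ≤ 4 ^ c.N := by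
    rw [← pow_mul, mul_comm, pow_mul]
    norm_num
    exact pow_le_pow_right₀ (by norm_num) hi.le
  refine (sub_le_mul_digitGap (one_le_digits hα) hlt (continuant_digits_le hα hk hi.le)
    (Q := 2 * c.digitSize k i) (by exact_mod_cast hβd.2.le)).trans ?_
  calc _ = 4 * (2 ^ i) ^ 2 * (continuant (digits α) (k * c.N) *
        ∏ j ∈ Finset.range i, (c.digitSize k j : ℝ)) ^ 2 * c.digitSize k i ^ 2 *
          digitGap (digits α) (digits β) (k * c.N + i) := by ring
    _ ≤ _ := by gcongr

lemma prod_weight_mul_rpow_mul_le (hσ : σ ∈ c.admissible) (hk : c.IsSpecial k) (hi : i < c.m) :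
    (∏ j ∈ Finset.range k, c.weight j (σ j)) *
        (continuant (digits σ) (k * c.N) : ℝ) ^ (2 * c.s) *
        ((∏ j ∈ Finset.range i, (c.digitSize k j : ℝ)) ^ (2 * c.s - 1) *
          (c.digitSize k i : ℝ) ^ c.s) ≤
      2 ^ (c.N + 1) * c.B ^ c.f := by
  have hB := c.B_pos
  calc _ ≤ c.B ^ (-((k * c.N : ℕ) : ℝ) * c.f) *
        (2 ^ (c.N + 1) * c.B ^ c.f * c.B ^ (((k * c.N : ℕ) : ℝ) * c.f)) :=
        mul_le_mul ((prod_weight_mul_rpow_le hσ k).trans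
          (mul_le_of_le_one_left (by positivity) hk))
          (rpow_prod_digitSize_mul_rpow_le hi) (by positivity) (by positivity)
    _ = _ := by
        rw [neg_mul, Real.rpow_neg hB.le]
        field_simp

lemma prod_weight_mul_inv_prod_digitSize_mul_le (hk : c.IsSpecial k) (hi : i < c.N)
    (hα : α ∈ c.admissible) (hβ : β ∈ c.admissible)
    (hlt : digits α (k * c.N + i) < digits β (k * c.N + i)) :
    (∏ j ∈ Finset.range k, c.weight j (α j)) *
        ((∏ j ∈ Finset.range i, (c.digitSize k j : ℝ))⁻¹ *
          (((digits β (k * c.N + i) : ℝ) - digits α (k * c.N + i) + 1) / c.digitSize k i)) ≤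
      c.specialConst * digitGap (digits α) (digits β) (k * c.N + i) ^ c.s := by
  have hαd := digits_mem_digitSet hα k hi
  have hβd := digits_mem_digitSet hβ k hi
  rw [digitSet_of_isSpecial hk, Finset.mem_Ico] at hαd hβd
  have him : i < c.m := by
    by_contra him
    rw [digitSize_of_not_lt him] at hαd hβd
    lia
  refine (mul_inv_mul_div_le c.s_pos.le c.s_lt_one.le
    (Finset.prod_nonneg fun j _ => c.weight_nonneg j _)
    (one_pos.trans_le (one_le_continuant_digits hα _))
    (Finset.prod_pos fun j _ => c.digitSize_pos k j) (by positivity) (digitGap_nonneg hlt.le)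
    ?_ ?_ (digits_sub_digits_le hk hi hα hβ hlt)
    (prod_weight_mul_rpow_mul_le hα hk him)).trans_eq ?_
  · rw [le_sub_iff_add_le']
    exact_mod_cast hlt
  · have hlow : (c.digitSize k i : ℝ) ≤ digits α (k * c.N + i) := Nat.cast_le.2 hαd.1
    have hhigh : (digits β (k * c.N + i) : ℝ) + 1 ≤ 2 * c.digitSize k i := by
      exact_mod_cast hβd.2
    linarith
  · rw [specialConst, ← mul_assoc 2]
    norm_num

lemma cantorMeasure_digitStrip_le_of_isSpecial (hk : c.IsSpecial k) (hi : i < c.N)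
    (hα : α ∈ c.admissible) (hβ : β ∈ c.admissible)
    (hlt : digits α (k * c.N + i) < digits β (k * c.N + i)) :
    c.cantorMeasure (digitStrip α β (k * c.N + i)) ≤
      ENNReal.ofReal (c.specialConst * digitGap (digits α) (digits β) (k * c.N + i) ^ c.s) := by
  set n := k * c.N + i
  have hcard : ((Finset.Icc (digits α n) (digits β n)).card : ℝ) =
      (digits β n : ℝ) - digits α n + 1 := by
    rw [Nat.card_Icc, Nat.cast_sub (by lia), Nat.cast_add_one]
    ring
  calc c.cantorMeasure (digitStrip α β n)
      ≤ c.cantorMeasure {σ | (∀ j < k, σ j = α j) ∧ σ k ∈ {w | (∀ j : Fin c.N, (j : ℕ) < i →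
          w j = α k j) ∧ w ⟨i, hi⟩ ∈ Finset.Icc (digits α n) (digits β n)}} := by
        refine measure_mono fun σ hσ => ⟨fun j => eq_of_digits_eq fun p hp => hσ.1 p (by lia),
          fun j hj => ?_, ?_⟩
        · rw [← digits_mul_add σ, ← digits_mul_add α]
          exact hσ.1 _ (by lia)
        · rw [← digits_mul_add σ]
          exact hσ.2
    _ ≤ ENNReal.ofReal (∏ j ∈ Finset.range k, c.weight j (α j)) * _ :=
        (cantorMeasure_cylinder_le α k _).trans
          (mul_le_mul_right (blockMeasure_box_le hk hi (α k) _) _)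
    _ ≤ _ := by
        rw [← ENNReal.ofReal_mul (Finset.prod_nonneg fun j _ => c.weight_nonneg j _), hcard]
        exact ENNReal.ofReal_le_ofReal
          (prod_weight_mul_inv_prod_digitSize_mul_le hk hi hα hβ hlt)

lemma cantorMeasure_digitStrip_le (hα : α ∈ c.admissible) (hβ : β ∈ c.admissible)
    (hlt : digits α n < digits β n) :
    c.cantorMeasure (digitStrip α β n) ≤ ENNReal.ofReal
      (max c.ordinaryConst c.specialConst * digitGap (digits α) (digits β) n ^ c.s) := by
  have hR := digitGap_nonneg hlt.le
  obtain ⟨k, i, hi, rfl⟩ : ∃ k i, i < c.N ∧ n = k * c.N + i :=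
    ⟨n / c.N, n % c.N, Nat.mod_lt _ c.N_pos, (Nat.div_add_mod' _ _).symm⟩
  by_cases hk : c.IsSpecial k
  · refine (cantorMeasure_digitStrip_le_of_isSpecial hk hi hα hβ hlt).trans ?_
    gcongr
    exact le_max_right _ _
  · refine (cantorMeasure_digitStrip_le_of_not_isSpecial hk hi hα hβ hlt).trans ?_
    gcongr
    exact le_max_left _ _

end CantorParams

theorem ofReal_le_dimH_of_measure_le {X : Type*} [EMetricSpace X] [MeasurableSpace X]
    [BorelSpace X] {μ : Measure X} {s : ℝ} {C : ℝ≥0∞} {F : Set X} (hs : 0 ≤ s) (hC : C ≠ ∞)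
    (hF : μ F ≠ 0) (h : ∀ U, IsClosed U → μ U ≤ C * Metric.ediam U ^ s) :
    ENNReal.ofReal s ≤ dimH F := by
  have hle : C⁻¹ • μ ≤ Measure.hausdorffMeasure s := by
    refine Measure.le_hausdorffMeasure s _ 1 one_pos fun U _ => ?_
    rw [Measure.smul_apply, smul_eq_mul, mul_comm, ← div_eq_mul_inv]
    refine ENNReal.div_le_of_le_mul ?_
    calc μ U ≤ μ (closure U) := measure_mono subset_closure
      _ ≤ Metric.ediam U ^ s * C := by
        rw [← Metric.ediam_closure U, mul_comm]
        exact h _ isClosed_closure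
  have hne : Measure.hausdorffMeasure (s.toNNReal : ℝ) F ≠ 0 := by
    rw [Real.coe_toNNReal s hs]
    refine ((pos_iff_ne_zero.2 ?_).trans_le (hle F)).ne'
    rw [Measure.smul_apply, smul_eq_mul]
    exact mul_ne_zero (ENNReal.inv_ne_zero.2 hC) hF
  exact le_dimH_of_hausdorffMeasure_ne_zero hne

lemma exists_extremal_of_nontrivial {V : Set (ℕ → ℕ)} (hV : V.Nontrivial)
    (hbdd : ∀ n, BddAbove ((fun a : ℕ → ℕ => a n) '' V)) :
    ∃ n, ∃ α ∈ V, ∃ β ∈ V, α n < β n ∧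
      ∀ a ∈ V, (∀ p < n, a p = α p) ∧ a n ∈ Finset.Icc (α n) (β n) := by
  classical
  have hdiff : ∃ n, ∃ a ∈ V, ∃ b ∈ V, a n ≠ b n := by
    obtain ⟨a, ha, b, hb, hab⟩ := hV
    obtain ⟨n, hn⟩ := Function.ne_iff.1 hab
    exact ⟨n, a, ha, b, hb, hn⟩
  obtain ⟨a, ha, b, hb, hab⟩ := Nat.find_spec hdiff
  set n := Nat.find hdiff
  set S := (fun a : ℕ → ℕ => a n) '' V
  have hS : S.Nonempty := ⟨a n, mem_image_of_mem _ ha⟩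
  obtain ⟨α, hα, hαS : α n = sInf S⟩ := Nat.sInf_mem hS
  obtain ⟨β, hβ, hβS : β n = sSup S⟩ := Nat.sSup_mem hS (hbdd n)
  have hIcc : ∀ a ∈ V, α n ≤ a n ∧ a n ≤ β n := fun a ha =>
    ⟨hαS ▸ Nat.sInf_le (mem_image_of_mem _ ha), hβS ▸ le_csSup (hbdd n) (mem_image_of_mem _ ha)⟩
  refine ⟨n, α, hα, β, hβ, ?_, fun a ha => ⟨fun p hp => ?_, Finset.mem_Icc.2 (hIcc a ha)⟩⟩
  · have := hIcc a ha
    have := hIcc b hb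
    lia
  · by_contra hne
    exact Nat.find_min hdiff hp ⟨a, ha, α, hα, hne⟩

namespace CantorParams

variable {c : CantorParams} {n : ℕ} {τ α β : ℕ → Fin c.N → ℕ}

lemma cantorMeasure_setOf_digits_eq (hτ : τ ∈ c.admissible) :
    c.cantorMeasure {σ | digits σ = digits τ} = 0 := by
  have hle : ∀ k : ℕ, c.cantorMeasure {σ | digits σ = digits τ} ≤
      ENNReal.ofReal (c.distortion * (2 * (1 / 2) ^ k) ^ c.s) := by
    intro k
    have hq := one_le_continuant_digits hτ (k * c.N)
    have hgrowth : 1 ≤ ((continuant (digits τ) (k * c.N) : ℝ) * 1) ^ 2 * (2 * (1 / 2) ^ k) := by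
      have htwo : (2 : ℝ) ^ k ≤ 2 * (continuant (digits τ) (k * c.N) : ℝ) ^ 2 := by
        exact_mod_cast (Nat.pow_le_pow_right two_pos (Nat.le_mul_of_pos_right k c.N_pos)).trans
          (two_pow_le_two_mul_continuant_sq (one_le_digits hτ) (k * c.N))
      calc (1 : ℝ) = 2 ^ k * (1 / 2) ^ k := by rw [← mul_pow]; norm_num
        _ ≤ 2 * (continuant (digits τ) (k * c.N) : ℝ) ^ 2 * (1 / 2) ^ k := by gcongr
        _ = _ := by ring
    calc c.cantorMeasure {σ | digits σ = digits τ}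
        ≤ c.cantorMeasure {σ | (∀ j < k, σ j = τ j) ∧ σ k ∈ univ} :=
          measure_mono fun σ hσ =>
            ⟨fun j => eq_of_digits_eq fun p _ => congrFun hσ p, mem_univ _⟩
      _ ≤ ENNReal.ofReal (∏ j ∈ Finset.range k, c.weight j (τ j)) := by
          simpa using cantorMeasure_cylinder_le τ k univ
      _ ≤ _ := by
          refine ENNReal.ofReal_le_ofReal ?_
          simpa using le_mul_rpow_of_one_le_mul c.s_pos.le
            (Finset.prod_nonneg fun j _ => c.weight_nonneg j _) (zero_le_one.trans hq) zero_le_one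
            (by positivity) hgrowth (prod_weight_mul_rpow_le_distortion hτ k)
  have hlim : Tendsto (fun k : ℕ => ENNReal.ofReal (c.distortion * (2 * (1 / 2) ^ k) ^ c.s))
      atTop (𝓝 0) := by
    have hpow : Tendsto (fun k : ℕ => 2 * (1 / 2 : ℝ) ^ k) atTop (𝓝 0) := by
      simpa using (tendsto_pow_atTop_nhds_zero_of_lt_one (r := (1 / 2 : ℝ))
        (by norm_num) (by norm_num)).const_mul 2
    have := ENNReal.tendsto_ofReal
      ((hpow.rpow_const (.inr c.s_pos.le)).const_mul c.distortion)
    rwa [Real.zero_rpow c.s_pos.ne', mul_zero, ENNReal.ofReal_zero] at this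
  exact le_antisymm (ge_of_tendsto' hlim hle) bot_le

lemma bddAbove_digits (c : CantorParams) (n : ℕ) :
    BddAbove ((fun σ => digits σ n) '' c.admissible) := by
  refine ⟨(c.digitSet (n / c.N) (n % c.N)).sup id, ?_⟩
  rintro _ ⟨σ, hσ, rfl⟩
  have := digits_mem_digitSet hσ (n / c.N) (Nat.mod_lt n c.N_pos)
  rw [Nat.div_add_mod'] at this
  exact Finset.le_sup (f := id) this

lemma forall_two_le_digits_or_forall_digits_le (c : CantorParams) (n : ℕ) :
    (∀ σ ∈ c.admissible, 2 ≤ digits σ n) ∨ ∀ σ ∈ c.admissible, digits σ n ≤ c.M := by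
  have hmem : ∀ σ ∈ c.admissible, digits σ n ∈ c.digitSet (n / c.N) (n % c.N) := fun σ hσ => by
    simpa only [Nat.div_add_mod'] using digits_mem_digitSet hσ (n / c.N) (Nat.mod_lt n c.N_pos)
  exact (c.forall_two_le_or_forall_le (n / c.N) (n % c.N)).imp
    (fun h σ hσ => h _ (hmem σ hσ)) fun h σ hσ => h _ (hmem σ hσ)

/-- The constant of the mass distribution principle. -/
noncomputable def massConst (c : CantorParams) : ℝ :=
  max c.ordinaryConst c.specialConst * (16 * (c.M + 1)) ^ c.s

lemma digitGap_digits_le (hα : α ∈ c.admissible) (hβ : β ∈ c.admissible)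
    (hagree : ∀ p < n, digits α p = digits β p) (hlt : digits α n < digits β n) :
    digitGap (digits α) (digits β) n ≤ 16 * (c.M + 1) * |code α - code β| := by
  have hnext : 2 ≤ digits α (n + 1) ∨ digits β (n + 1) ≤ c.M :=
    (c.forall_two_le_digits_or_forall_digits_le (n + 1)).imp (fun h => h α hα) fun h => h β hβ
  have := le_abs_cfValue_sub_cfValue (one_le_digits hα) (one_le_digits hβ) hagree hlt
    c.one_le_M hnext
  rw [mul_assoc (16 * _), ← div_div, div_right_comm, div_le_iff₀' (by positivity)] at this
  exact this

theorem cantorMeasure_inter_preimage_code_le (c : CantorParams) (U : Set ℝ) :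
    c.cantorMeasure (c.admissible ∩ code ⁻¹' U) ≤
      ENNReal.ofReal c.massConst * Metric.ediam U ^ c.s := by
  set V := c.admissible ∩ code ⁻¹' U
  have hs := c.s_pos
  rcases (digits '' V).subsingleton_or_nontrivial with hsub | hnt
  · rcases V.eq_empty_or_nonempty with hV | ⟨τ, hτ⟩
    · simp [hV]
    · exact ((measure_mono fun σ hσ => hsub (mem_image_of_mem _ hσ) (mem_image_of_mem _ hτ)).trans
        (cantorMeasure_setOf_digits_eq hτ.1).le).trans bot_le
  obtain ⟨n, _, ⟨α, hα, rfl⟩, _, ⟨β, hβ, rfl⟩, hlt, hV⟩ := exists_extremal_of_nontrivial hnt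
    fun n => (c.bddAbove_digits n).mono (by rintro _ ⟨_, ⟨σ, hσ, rfl⟩, rfl⟩; exact ⟨σ, hσ.1, rfl⟩)
  have hgap := digitGap_digits_le hα.1 hβ.1
    (fun p hp => ((hV _ (mem_image_of_mem _ hβ)).1 p hp).symm) hlt
  have hdiam : ENNReal.ofReal |code α - code β| ≤ Metric.ediam U := by
    rw [← Real.dist_eq, ← edist_dist]
    exact Metric.edist_le_ediam_of_mem hα.2 hβ.2
  have hC : 0 ≤ max c.ordinaryConst c.specialConst :=
    le_max_of_le_right (by have := c.B_pos; unfold specialConst; positivity)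
  calc c.cantorMeasure V ≤ c.cantorMeasure (digitStrip α β n) :=
        measure_mono fun σ hσ => hV _ (mem_image_of_mem _ hσ)
    _ ≤ _ := cantorMeasure_digitStrip_le hα.1 hβ.1 hlt
    _ ≤ ENNReal.ofReal (max c.ordinaryConst c.specialConst *
          (16 * (c.M + 1) * |code α - code β|) ^ c.s) := by
        have := digitGap_nonneg hlt.le
        gcongr
    _ = ENNReal.ofReal c.massConst * ENNReal.ofReal |code α - code β| ^ c.s := by
        rw [Real.mul_rpow (by positivity) (abs_nonneg _), ← mul_assoc,
          ENNReal.ofReal_mul (by positivity), ENNReal.ofReal_rpow_of_nonneg (abs_nonneg _) hs.le,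
          massConst]
    _ ≤ _ := by gcongr

theorem le_dimH_of_code_mem (c : CantorParams) {F : Set ℝ}
    (hF : ∀ σ ∈ c.admissible, code σ ∈ F) : ENNReal.ofReal c.s ≤ dimH F := by
  refine ofReal_le_dimH_of_measure_le (μ := c.cantorMeasure.map code) c.s_pos.le
    (ENNReal.ofReal_ne_top (r := c.massConst)) ?_ fun U hU => ?_
  · have hone : 1 = c.cantorMeasure (code ⁻¹' F) := by
      rw [← measure_univ (μ := c.cantorMeasure)]
      exact measure_congr (eventuallyEq_univ.2 (c.ae_mem_admissible.mono hF)).symm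
    exact (one_pos.trans_le
      (hone.trans_le (Measure.le_map_apply measurable_code.aemeasurable F))).ne'
  · rw [Measure.map_apply measurable_code hU.measurableSet]
    refine (measure_mono_ae ?_).trans (c.cantorMeasure_inter_preimage_code_le U)
    exact c.ae_mem_admissible.mono fun σ hσ hU => ⟨hσ, hU⟩

end CantorParams

namespace CantorParams

variable {c : CantorParams} {k i : ℕ} {σ : ℕ → Fin c.N → ℕ}

/-! ### The products of consecutive digits -/

lemma pq_code (hσ : σ ∈ c.admissible) (p : ℕ) : pq (code σ) (p + 1) = digits σ p :=
  pq_cfValue (one_le_digits hσ) p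

lemma infinite_setOf_pow_le_prod_pq (hσ : σ ∈ c.admissible) :
    {n : ℕ | c.B ^ n ≤ ∏ i ∈ Finset.range c.m, (pq (code σ) (n + i) : ℝ)}.Infinite := by
  refine (c.infinite_setOf_isSpecial.image (f := fun k => k * c.N + 1)
    fun k _ l _ h => ?_).mono ?_
  · exact Nat.eq_of_mul_eq_mul_right c.N_pos (Nat.succ_injective h)
  rintro _ ⟨k, hk, rfl⟩
  calc c.B ^ (k * c.N + 1) = c.B ^ (((k * c.N + 1 : ℕ) : ℝ) * digitExpSum c.s c.f c.m) := by
        rw [digitExpSum_eq_one, mul_one, Real.rpow_natCast]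
    _ ≤ ∏ i ∈ Finset.range c.m, (c.digitSize k i : ℝ) := rpow_le_prod_digitSize le_rfl
    _ ≤ _ := by
      refine Finset.prod_le_prod (fun i _ => Nat.cast_nonneg _) fun i hi => ?_
      have hmem := digits_mem_digitSet hσ k ((Finset.mem_range.1 hi).trans_le c.m_le_N)
      rw [digitSet_of_isSpecial hk, Finset.mem_Ico] at hmem
      rw [add_right_comm, pq_code hσ]
      exact_mod_cast hmem.1

open Classical in
/-- The exponent `e` for which the digit in position `p` is of size `B ^ (p * e)`, up to a bounded
factor. -/
noncomputable def sizeExp (c : CantorParams) (p : ℕ) : ℝ :=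
  if c.IsSpecial (p / c.N) ∧ p % c.N < c.m then digitExp c.s c.f (p % c.N) else 0

open Classical in
lemma sizeExp_mul_add (k : ℕ) (hi : i < c.N) :
    c.sizeExp (k * c.N + i) = if c.IsSpecial k ∧ i < c.m then digitExp c.s c.f i else 0 := by
  rw [sizeExp, mul_comm k, Nat.mul_add_div c.N_pos, Nat.mul_add_mod, Nat.div_eq_of_lt hi,
    Nat.mod_eq_of_lt hi, add_zero]

lemma sizeExp_of_not_isSpecial (hk : ¬ c.IsSpecial k) (hi : i < c.N) :
    c.sizeExp (k * c.N + i) = 0 := by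
  rw [sizeExp_mul_add k hi, if_neg fun h => hk h.1]

lemma sizeExp_le_digitExp (k : ℕ) (hi : i < c.N) :
    c.sizeExp (k * c.N + i) ≤ digitExp c.s c.f i := by
  rw [sizeExp_mul_add k hi]
  split_ifs
  exacts [le_rfl, (digitExp_pos c.s_mem c.f_pos i).le]

lemma digits_le (hσ : σ ∈ c.admissible) {p : ℕ} {y : ℝ} (hy : (p : ℝ) + 1 ≤ y) :
    (digits σ p : ℝ) ≤ 4 * c.M * c.B ^ (y * c.sizeExp p) := by
  obtain ⟨k, i, hi, rfl⟩ : ∃ k i, i < c.N ∧ k * c.N + i = p :=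
    ⟨p / c.N, p % c.N, Nat.mod_lt _ c.N_pos, Nat.div_add_mod' p c.N⟩
  have hM : (1 : ℝ) ≤ c.M := by exact_mod_cast c.one_le_M
  have hmem := digits_mem_digitSet hσ k hi
  rw [sizeExp_mul_add k hi]
  by_cases hk : c.IsSpecial k
  · rw [digitSet_of_isSpecial hk, Finset.mem_Ico] at hmem
    by_cases him : i < c.m
    · rw [if_pos ⟨hk, him⟩]
      calc (digits σ (k * c.N + i) : ℝ) ≤ 2 * c.digitSize k i := by exact_mod_cast hmem.2.le
        _ ≤ 2 * (2 * c.B ^ (((k * c.N + 1 : ℕ) : ℝ) * digitExp c.s c.f i)) := by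
          gcongr
          exact digitSize_le him
        _ = 4 * 1 * c.B ^ (((k * c.N + 1 : ℕ) : ℝ) * digitExp c.s c.f i) := by ring
        _ ≤ 4 * c.M * c.B ^ (y * digitExp c.s c.f i) := by
          have hB := c.B_pos
          gcongr
          · exact c.one_lt_B.le
          · exact (digitExp_pos c.s_mem c.f_pos i).le
          · push_cast at hy ⊢
            linarith [Nat.cast_nonneg (α := ℝ) i]
    · rw [digitSize_of_not_lt him] at hmem
      have hone : digits σ (k * c.N + i) = 1 := by lia
      rw [if_neg fun h => him h.2, mul_zero, Real.rpow_zero, hone]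
      push_cast
      linarith
  · rw [digitSet_of_not_isSpecial hk, Finset.mem_Icc] at hmem
    have hle : (digits σ (k * c.N + i) : ℝ) ≤ c.M := by exact_mod_cast hmem.2
    rw [if_neg fun h => hk h.1, mul_zero, Real.rpow_zero]
    linarith

-- A window of length at most `N` meets at most one special block, and the exponents decrease along
-- that block, so the extremal window is the one starting with the block.
lemma sum_sizeExp_le {L : ℕ} (hL : L ≤ c.N) (n : ℕ) :
    ∑ j ∈ Finset.range L, c.sizeExp (n + j) ≤ digitExpSum c.s c.f L := by
  have hpos : ∀ j, 0 ≤ digitExp c.s c.f j := fun j => (digitExp_pos c.s_mem c.f_pos j).le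
  obtain ⟨k, i, hi, rfl⟩ : ∃ k i, i < c.N ∧ k * c.N + i = n :=
    ⟨n / c.N, n % c.N, Nat.mod_lt _ c.N_pos, Nat.div_add_mod' n c.N⟩
  have hnext : ∀ j, k * c.N + i + (c.N - i + j) = (k + 1) * c.N + j := fun j => by
    rw [add_one_mul]; lia
  by_cases hk : c.IsSpecial k
  · refine Finset.sum_le_sum fun j hj => ?_
    have hjL := Finset.mem_range.1 hj
    rcases lt_or_ge (i + j) c.N with hij | hij
    · rw [add_assoc]
      exact (sizeExp_le_digitExp k hij).trans
        (digitExp_antitone c.half_lt_s.le c.s_lt_one.le c.f_pos.le (Nat.le_add_left j i))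
    · obtain ⟨l, rfl⟩ : ∃ l, j = c.N - i + l := Nat.exists_eq_add_of_le (by lia)
      rw [hnext, sizeExp_of_not_isSpecial hk.not_succ (by lia)]
      exact hpos _
  · have hzero : ∀ j < c.N - i, c.sizeExp (k * c.N + i + j) = 0 := fun j hj => by
      rw [add_assoc, sizeExp_of_not_isSpecial hk (by lia)]
    rcases le_total L (c.N - i) with hLi | hLi
    · rw [Finset.sum_eq_zero fun j hj => hzero j ((Finset.mem_range.1 hj).trans_le hLi)]
      exact digitExpSum_nonneg c.s_mem c.f_pos L
    · obtain ⟨l, rfl⟩ := Nat.exists_eq_add_of_le hLi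
      rw [Finset.sum_range_add, Finset.sum_eq_zero fun j hj => hzero j (Finset.mem_range.1 hj),
        zero_add]
      calc ∑ j ∈ Finset.range l, c.sizeExp (k * c.N + i + (c.N - i + j))
          ≤ digitExpSum c.s c.f l := Finset.sum_le_sum fun j hj => by
            rw [hnext]
            exact sizeExp_le_digitExp _ ((Finset.mem_range.1 hj).trans_le (by lia))
        _ ≤ _ := Finset.sum_le_sum_of_subset_of_nonneg
            (Finset.range_subset_range.2 (Nat.le_add_left l _)) fun j _ _ => hpos j

lemma prod_digits_le (hσ : σ ∈ c.admissible) {L : ℕ} (hL : L ≤ c.N) (n : ℕ) :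
    ∏ i ∈ Finset.range L, (digits σ (n + i) : ℝ) ≤
      (4 * c.M) ^ L * c.B ^ ((n + c.N : ℝ) * digitExpSum c.s c.f L) := by
  have hB := c.B_pos
  calc ∏ i ∈ Finset.range L, (digits σ (n + i) : ℝ)
      ≤ ∏ i ∈ Finset.range L, 4 * (c.M : ℝ) * c.B ^ ((n + c.N : ℝ) * c.sizeExp (n + i)) := by
        refine Finset.prod_le_prod (fun i _ => Nat.cast_nonneg _) fun i hi => digits_le hσ ?_
        exact_mod_cast (show n + i + 1 ≤ n + c.N by have := Finset.mem_range.1 hi; lia)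
    _ = (4 * (c.M : ℝ)) ^ L *
        c.B ^ ((n + c.N : ℝ) * ∑ i ∈ Finset.range L, c.sizeExp (n + i)) := by
        rw [Finset.prod_mul_distrib, Finset.prod_const, Finset.card_range, Finset.mul_sum,
          Real.rpow_sum_of_pos hB]
    _ ≤ _ := by
        gcongr
        exacts [c.one_lt_B.le, sum_sizeExp_le hL n]

lemma eventually_prod_pq_lt_pow (hσ : σ ∈ c.admissible) {L : ℕ} (hL : L ≤ c.N) {b : ℝ}
    (hb : c.B ^ digitExpSum c.s c.f L < b) :
    ∀ᶠ n : ℕ in atTop, ∏ i ∈ Finset.range L, (pq (code σ) (n + 1 + i) : ℝ) < b ^ n := by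
  have hB := c.B_pos
  set θ := digitExpSum c.s c.f L
  have hb0 : 0 < b := (Real.rpow_pos_of_pos hB θ).trans hb
  have hlim := (tendsto_pow_atTop_nhds_zero_of_lt_one (r := c.B ^ θ / b) (by positivity)
    ((div_lt_one hb0).2 hb)).const_mul ((4 * c.M) ^ L * c.B ^ (c.N * θ))
  rw [mul_zero] at hlim
  filter_upwards [hlim.eventually_lt_const one_pos] with n hn
  calc ∏ i ∈ Finset.range L, (pq (code σ) (n + 1 + i) : ℝ)
      = ∏ i ∈ Finset.range L, (digits σ (n + i) : ℝ) :=
        Finset.prod_congr rfl fun i _ => by rw [add_right_comm, pq_code hσ]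
    _ ≤ (4 * c.M) ^ L * c.B ^ ((n + c.N : ℝ) * θ) := prod_digits_le hσ hL n
    _ = (4 * c.M) ^ L * c.B ^ (c.N * θ) * (c.B ^ θ) ^ n := by
        rw [← Real.rpow_mul_natCast hB.le, mul_assoc, ← Real.rpow_add hB]
        ring_nf
    _ < b ^ n := by
        rwa [div_pow, mul_div_assoc', div_lt_one (by positivity)] at hn

end CantorParams

/-! ### The Hausdorff dimension -/

lemma exists_lt_sum_piFinset_of_lt_partitionSum {B s f C : ℝ} {N : ℕ} (hB : 0 < B)
    (hC : 0 ≤ C) (h : ENNReal.ofReal C < partitionSum B s f N) :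
    ∃ M, 1 ≤ M ∧ C * B ^ (N * f) <
      ∑ w ∈ Fintype.piFinset fun _ : Fin N => Finset.Icc 1 M, (contQ N w : ℝ) ^ (-(2 * s)) := by
  classical
  rw [partitionSum, ENNReal.tsum_eq_iSup_sum, lt_iSup_iff] at h
  obtain ⟨S, hS⟩ := h
  rw [← ENNReal.ofReal_sum_of_nonneg fun w _ => by positivity,
    ENNReal.ofReal_lt_ofReal_iff_of_nonneg hC, ← Finset.mul_sum, neg_mul, Real.rpow_neg hB.le,
    lt_inv_mul_iff₀' (by positivity)] at hS
  let coe (a : Fin N → ℕ+) (i : Fin N) : ℕ := a i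
  have hcoe : Function.Injective coe := PNat.coe_injective.comp_left
  refine ⟨S.sup (fun a => Finset.univ.sup (coe a)) + 1, Nat.le_add_left _ _, hS.trans_le ?_⟩
  rw [← Finset.sum_image (g := coe) (f := fun w => (contQ N w : ℝ) ^ (-(2 * s))) hcoe.injOn]
  refine Finset.sum_le_sum_of_subset_of_nonneg (Finset.image_subset_iff.2 fun a ha => ?_)
    fun w _ _ => by positivity
  refine Fintype.mem_piFinset.2 fun i => Finset.mem_Icc.2 ⟨(a i).pos, Nat.le_succ_of_le ?_⟩
  exact (Finset.le_sup (f := coe a) (Finset.mem_univ i)).trans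
    (Finset.le_sup (f := fun a => Finset.univ.sup (coe a)) ha)

lemma exists_cantorParams {B s : ℝ} {m : ℕ} (hB : 1 < B) (hs : s ∈ Ioo (1 / 2 : ℝ) 1)
    (hm : 2 ≤ m) (hgrowth : 0 < ExpGrowth.expGrowthSup (partitionSum B s (fIter s (m - 1)))) :
    ∃ c : CantorParams, c.B = B ∧ c.s = s ∧ c.m = m := by
  obtain ⟨N, hN, hlarge⟩ :=
    exists_lt_of_expGrowthSup_pos hgrowth (ENNReal.ofReal_ne_top (r := 8)) m
  obtain ⟨M, hM, hsum⟩ :=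
    exists_lt_sum_piFinset_of_lt_partitionSum (one_pos.trans hB) (by norm_num) hlarge
  exact ⟨{ B, s, m, N, M, one_lt_B := hB, half_lt_s := hs.1, s_lt_one := hs.2, two_le_m := hm,
           m_le_N := hN, one_le_M := hM, le_sum := hsum.le }, rfl, rfl, rfl⟩

/-- The set `𝓕^m_{B₁,B₂}`: the points of `largeProductSet B₁ m` for which the products of `m - 1`
consecutive partial quotients are eventually less than `B₂ ^ n`. -/
def restrictedProductSet (B₁ B₂ : ℝ) (m : ℕ) : Set ℝ :=
  {x | x ∈ Ioo 0 1 ∧ Irrational x ∧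
    {n : ℕ | B₁ ^ n ≤ ∏ i ∈ Finset.range m, (pq x (n + i) : ℝ)}.Infinite ∧
    ∀ᶠ n : ℕ in atTop, ∏ i ∈ Finset.range (m - 1), (pq x (n + 1 + i) : ℝ) < B₂ ^ n}

lemma restrictedProductSet_subset (B₁ B₂ : ℝ) (m : ℕ) :
    restrictedProductSet B₁ B₂ m ⊆ largeProductSet B₁ m :=
  fun _ hx => ⟨hx.1, hx.2.1, hx.2.2.1⟩

lemma code_mem_restrictedProductSet {c : CantorParams} {σ : ℕ → Fin c.N → ℕ}
    (hσ : σ ∈ c.admissible) {b : ℝ} (hb : c.B ^ (1 - digitExp c.s c.f (c.m - 1)) < b) :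
    CantorParams.code σ ∈ restrictedProductSet c.B b c.m := by
  have hdigits := CantorParams.one_le_digits hσ
  have hsum := digitExpSum_succ c.s c.f (c.m - 1)
  rw [Nat.sub_add_cancel (one_le_two.trans c.two_le_m), c.digitExpSum_eq_one] at hsum
  rw [hsum, add_sub_cancel_right] at hb
  exact ⟨cfValue_mem_Ioo hdigits, irrational_cfValue hdigits,
    CantorParams.infinite_setOf_pow_le_prod_pq hσ,
    CantorParams.eventually_prod_pq_lt_pow hσ ((Nat.sub_le _ _).trans c.m_le_N) hb⟩

lemma ofReal_le_dimH_restrictedProductSet {B₁ B₂ s : ℝ} {m : ℕ} (hB₁ : 1 < B₁)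
    (hs : s ∈ Ioo (1 / 2 : ℝ) 1) (hm : 2 ≤ m)
    (hgrowth : 0 < ExpGrowth.expGrowthSup (partitionSum B₁ s (fIter s (m - 1))))
    (hB₂ : B₁ ^ (1 - digitExp s (fIter s (m - 1)) (m - 1)) < B₂) :
    ENNReal.ofReal s ≤ dimH (restrictedProductSet B₁ B₂ m) := by
  obtain ⟨c, rfl, rfl, rfl⟩ := exists_cantorParams hB₁ hs hm hgrowth
  exact c.le_dimH_of_code_mem fun σ hσ => code_mem_restrictedProductSet hσ hB₂

lemma expGrowthSup_pos_of_lt_tExpM {B s : ℝ} {m : ℕ} (hs : s ∈ Icc (0 : ℝ) 1)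
    (hst : s < tExpM B m) :
    0 < ExpGrowth.expGrowthSup (partitionSum B s (fIter s (m - 1))) := by
  rw [tExpM_eq_sInf] at hst
  by_contra! h
  exact notMem_of_lt_csInf hst ⟨0, fun _ hr => hr.1⟩ ⟨hs.1, hs.2, h⟩

lemma exists_expGrowthSup_nonpos_of_tExpM_lt {B r : ℝ} {m : ℕ} (ht : 0 < tExpM B m)
    (hr : tExpM B m < r) : ∃ s ∈ Ico (tExpM B m) r,
      ExpGrowth.expGrowthSup (partitionSum B s (fIter s (m - 1))) ≤ 0 := by
  rw [tExpM_eq_sInf] at ht hr ⊢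
  obtain ⟨s, hs, hsr⟩ := exists_lt_of_csInf_lt
    (nonempty_iff_ne_empty.2 fun h => ht.ne' (by rw [h, Real.sInf_empty])) hr
  exact ⟨s, ⟨csInf_le ⟨0, fun _ h => h.1⟩ hs, hsr⟩, hs.2.2⟩

theorem dimH_largeProductSet_le_tExpM {B : ℝ} {m : ℕ} (hm : 1 ≤ m) (hB : 1 < B)
    (ht : tExpM B m ∈ Ioo (0 : ℝ) 1) :
    dimH (largeProductSet B m) ≤ ENNReal.ofReal (tExpM B m) := by
  have hright : Tendsto ENNReal.ofReal (𝓝[>] tExpM B m) (𝓝 (ENNReal.ofReal (tExpM B m))) :=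
    ENNReal.continuous_ofReal.continuousWithinAt
  refine ge_of_tendsto hright ?_
  filter_upwards [Ioo_mem_nhdsGT ht.2] with r hr
  obtain ⟨s, hs, hgrowth⟩ := exists_expGrowthSup_nonpos_of_tExpM_lt ht.1 hr.1
  exact (dimH_largeProductSet_le hm hB ⟨ht.1.trans_le hs.1, hs.2.trans hr.2⟩ hgrowth).trans
    (ENNReal.ofReal_le_ofReal hs.2.le)

theorem ofReal_tExpM_le_dimH_restrictedProductSet {B₁ B₂ : ℝ} {m : ℕ} (hm : 2 ≤ m) (hB₁ : 1 < B₁)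
    (ht : tExpM B₁ m ∈ Ioo (1 / 2 : ℝ) 1)
    (hB₂ : B₁ ^ (1 - digitExp (tExpM B₁ m) (fIter (tExpM B₁ m) (m - 1)) (m - 1)) ≤ B₂) :
    ENNReal.ofReal (tExpM B₁ m) ≤ dimH (restrictedProductSet B₁ B₂ m) := by
  have hleft : Tendsto ENNReal.ofReal (𝓝[<] tExpM B₁ m) (𝓝 (ENNReal.ofReal (tExpM B₁ m))) :=
    ENNReal.continuous_ofReal.continuousWithinAt
  refine le_of_tendsto hleft ?_
  filter_upwards [Ioo_mem_nhdsLT ht.1] with s hs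
  have hs0 : 0 < s := one_half_pos.trans hs.1
  have hs1 : s < 1 := hs.2.trans ht.2
  refine ofReal_le_dimH_restrictedProductSet hB₁ ⟨hs.1, hs1⟩ hm
    (expGrowthSup_pos_of_lt_tExpM ⟨hs0.le, hs1.le⟩ hs.2) (lt_of_lt_of_le ?_ hB₂)
  have hanti := digitExp_fIter_strictAntiOn (Nat.le_sub_one_of_lt hm) ⟨hs0, hs1⟩
    ⟨hs0.trans hs.2, ht.2⟩ hs.2
  exact Real.rpow_lt_rpow_of_exponent_lt hB₁ (sub_lt_sub_left hanti 1)

end GaussCF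

theorem new_application_case_one (m : ℕ) (hm : 2 ≤ m) (B₁ B₂ : ℝ)
    (hB₁ : 1 < B₁) (hB₂ : 1 < B₂)
    (ht : 1 / 2 < tExpM B₁ m ∧ tExpM B₁ m < 1)
    (hcase : B₁ ^ ((tExpM B₁ m ^ m - tExpM B₁ m * (1 - tExpM B₁ m) ^ (m - 1)) /
      (tExpM B₁ m ^ m - (1 - tExpM B₁ m) ^ m)) ≤ B₂) :
    dimH {x : ℝ | x ∈ Set.Ioo (0 : ℝ) 1 ∧ Irrational x ∧
      {n : ℕ | B₁ ^ n ≤ ∏ i ∈ Finset.range m, (pq x (n + i) : ℝ)}.Infinite ∧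
      (∀ᶠ n : ℕ in Filter.atTop,
        ∏ i ∈ Finset.range (m - 1), (pq x (n + 1 + i) : ℝ) < B₂ ^ n)} =
    ENNReal.ofReal (tExpM B₁ m) := by
  have hm1 : 1 ≤ m := one_le_two.trans hm
  have hθ := GaussCF.theta_eq_one_sub_digitExp ht (m - 1)
  rw [Nat.sub_add_cancel hm1] at hθ
  rw [hθ] at hcase
  change dimH (GaussCF.restrictedProductSet B₁ B₂ m) = _
  apply le_antisymm
  · calc dimH (GaussCF.restrictedProductSet B₁ B₂ m)
        ≤ dimH (GaussCF.largeProductSet B₁ m) :=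
          dimH_mono (GaussCF.restrictedProductSet_subset B₁ B₂ m)
      _ ≤ ENNReal.ofReal (tExpM B₁ m) :=
          GaussCF.dimH_largeProductSet_le_tExpM hm1 hB₁ ⟨one_half_pos.trans ht.1, ht.2⟩
  · exact GaussCF.ofReal_tExpM_le_dimH_restrictedProductSet hm hB₁ ht hcase
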